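/- Let n₁, n₂ ≥ 1 be integers, γ₁ ∈ (0, n₁/2) and γ₂ ∈ (0, n₂/2) with γ₁, γ₂ not integers, and μᵢ = nᵢ²/4 − γᵢ². Let f be a smooth compactly supported function on ℝ^{n₁}×ℝ^{n₂}. Then there exist functions F, G, H, I : ℝ^{n₁}×[0,∞)×ℝ^{n₂}×[0,∞) → ℝ, smooth up to the boundary, with F(x₁,0,x₂,0) = f(x₁,x₂) for all (x₁,x₂), such that the function u = y₁^{n₁/2−γ₁}y₂^{n₂/2−γ₂} F + y₁^{n₁/2−γ₁}y₂^{n₂/2+γ₂} G + y₁^{n₁/2+γ₁}y₂^{n₂/2−γ₂} H + y₁^{n₁/2+γ₁}y₂^{n₂/2+γ₂} I is strongly (μ₁,μ₂)-harmonic, i.e. satisfies both −Δ₁u = μ₁u and −Δ₂u = μ₂u on ℝ^{n₁}×(0,∞)×ℝ^{n₂}×(0,∞). -/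

import Mathlib

open Real Topology

noncomputable def lapX {n : ℕ} (u : EuclideanSpace ℝ (Fin n) → ℝ → ℝ)
    (x : EuclideanSpace ℝ (Fin n)) (y : ℝ) : ℝ :=
  ∑ i : Fin n, iteratedDeriv 2 (fun t : ℝ => u (x + t • EuclideanSpace.single i (1:ℝ)) y) 0

noncomputable def hypLap (n : ℕ) (u : EuclideanSpace ℝ (Fin n) → ℝ → ℝ)
    (x : EuclideanSpace ℝ (Fin n)) (y : ℝ) : ℝ :=
  y ^ 2 * (lapX u x y + iteratedDeriv 2 (u x) y) - ((n : ℝ) - 1) * y * deriv (u x) y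

noncomputable def hypLap1 (n₁ n₂ : ℕ)
    (u : EuclideanSpace ℝ (Fin n₁) → ℝ → EuclideanSpace ℝ (Fin n₂) → ℝ → ℝ)
    (x₁ : EuclideanSpace ℝ (Fin n₁)) (y₁ : ℝ)
    (x₂ : EuclideanSpace ℝ (Fin n₂)) (y₂ : ℝ) : ℝ :=
  hypLap n₁ (fun x y => u x y x₂ y₂) x₁ y₁

noncomputable def hypLap2 (n₁ n₂ : ℕ)
    (u : EuclideanSpace ℝ (Fin n₁) → ℝ → EuclideanSpace ℝ (Fin n₂) → ℝ → ℝ)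
    (x₁ : EuclideanSpace ℝ (Fin n₁)) (y₁ : ℝ)
    (x₂ : EuclideanSpace ℝ (Fin n₂)) (y₂ : ℝ) : ℝ :=
  hypLap n₂ (u x₁ y₁) x₂ y₂

/-!
The Fourier transform in `(x₁, x₂)` turns each equation `-Δᵢ u = μᵢ u` into an ordinary differential
equation in `yᵢ` with parameter the frequency `ξᵢ`. Its solution `y ^ (n / 2 - γ) * φ (π² |ξ|² y²)`
with `φ 0 = 1` and `φ` bounded has `φ w = a w + w ^ γ * b w`, where `a` and `b` are smooth on the
whole line with derivatives of polynomial growth. The product over the two factors, integrated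
against `𝓕 f`, solves both equations, and expanding `(a₁ + w₁ ^ γ₁ b₁) (a₂ + w₂ ^ γ₂ b₂)` under the
integral gives the four terms; each coefficient is smooth because `𝓕 f` decays rapidly, also after
multiplication by `|ξᵢ| ^ (2 γᵢ)`.

No asymptotics of Bessel functions enter. With `C_ν` the Bessel–Clifford function, `φ` is
`Γ(1 - γ) C_{-γ} - c w ^ γ C_γ`. By the Wronskian, `Γ(1 - γ) C_{-γ} / (w ^ γ C_γ)` decreases and
`(Γ(1 - γ) C_{-γ} - 1) / (w ^ γ C_γ)` increases, so some `c` lies between them for all `w`, that is,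
`0 ≤ φ ≤ 1`. All derivatives of `w ^ (-γ) φ` are then bounded for `w ≥ 1`: up to sign they are again
decaying solutions, of the equations of order `γ + 1`, `γ + 2`, ….
-/

open Set Filter MeasureTheory Function
open scoped ContDiff Nat SchwartzMap FourierTransform RealInnerProductSpace

/-! ### Bessel–Clifford functions -/

section BesselClifford

lemma summable_mul_pow_div_factorial {c : ℕ → ℝ} {C : ℝ} (hc : ∀ k, |c k| ≤ C) (x : ℝ) :
    Summable fun k : ℕ => c k * (x ^ k / k !) := by
  refine .of_norm_bounded ((Real.summable_pow_div_factorial |x|).mul_left C) fun k => ?_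
  rw [norm_mul, norm_div, norm_pow, RCLike.norm_natCast, Real.norm_eq_abs, Real.norm_eq_abs]
  gcongr
  exact hc k

lemma succ_mul_pow_div_factorial (x : ℝ) (k : ℕ) :
    ((k + 1 : ℕ) : ℝ) * (x ^ k / (k + 1)!) = x ^ k / k ! := by
  rw [Nat.factorial_succ]
  push_cast
  field_simp

lemma hasDerivAt_tsum_mul_pow_div_factorial {c : ℕ → ℝ} {C : ℝ} (hc : ∀ k, |c k| ≤ C) (x : ℝ) :
    HasDerivAt (fun x => ∑' k : ℕ, c k * (x ^ k / k !))
      (∑' k : ℕ, c (k + 1) * (x ^ k / k !)) x := by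
  set R := |x| + 1
  have hderiv (k : ℕ) (y : ℝ) : HasDerivAt (fun y => c k * (y ^ k / k !))
      (c k * (k * (y ^ (k - 1) / k !))) y := by
    rw [← mul_div_assoc]
    exact ((hasDerivAt_pow k y).div_const _).const_mul _
  have hmajorant : Summable fun k : ℕ => C * (k * (R ^ (k - 1) / k !)) := by
    rw [← summable_nat_add_iff 1]
    simpa only [Nat.add_sub_cancel, succ_mul_pow_div_factorial]
      using (Real.summable_pow_div_factorial R).mul_left C
  have hbound (k : ℕ) (y : ℝ) (hy : y ∈ Metric.ball 0 R) :
      ‖c k * (k * (y ^ (k - 1) / k !))‖ ≤ C * (k * (R ^ (k - 1) / k !)) := by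
    rw [mem_ball_zero_iff] at hy
    rw [norm_mul, norm_mul, norm_div, norm_pow, RCLike.norm_natCast, RCLike.norm_natCast]
    gcongr
    · exact (abs_nonneg _).trans (hc 0)
    · exact hc k
  have hx : x ∈ Metric.ball 0 R := by simp [R]
  have key := hasDerivAt_tsum_of_isPreconnected hmajorant Metric.isOpen_ball
    (convex_ball (0 : ℝ) R).isPreconnected (fun k y _ => hderiv k y) hbound hx
    (summable_mul_pow_div_factorial hc x) hx
  rwa [(Summable.of_norm_bounded hmajorant (hbound · x hx)).tsum_eq_zero_add,
    Nat.cast_zero, zero_mul, mul_zero, zero_add, tsum_congr fun k => by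
      rw [Nat.add_sub_cancel, succ_mul_pow_div_factorial]] at key

/-- Mathlib sets `Γ = 0` at its poles, and `0⁻¹ = 0`, so the recurrence of the entire function
`1 / Γ` holds without exception. -/
lemma mul_Gamma_add_one_inv (s : ℝ) : s * (Gamma (s + 1))⁻¹ = (Gamma s)⁻¹ := by
  rcases eq_or_ne s 0 with rfl | hs
  · simp [Real.Gamma_zero]
  · rw [Real.Gamma_add_one hs, mul_inv, mul_inv_cancel_left₀ hs]

lemma exists_abs_Gamma_inv_le (ν : ℝ) : ∃ C, ∀ k : ℕ, |(Gamma (ν + k + 1))⁻¹| ≤ C := by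
  have hev : ∀ᶠ k : ℕ in atTop, |(Gamma (ν + k + 1))⁻¹| ≤ 1 := by
    filter_upwards [tendsto_natCast_atTop_atTop.eventually_ge_atTop (1 - ν)] with k hk
    have h2 : 2 ≤ ν + k + 1 := by linarith
    have hΓ : 1 ≤ Gamma (ν + k + 1) := by
      simpa only [Real.Gamma_two]
        using Real.Gamma_strictMonoOn_Ici.monotoneOn self_mem_Ici h2 h2
    rw [abs_inv, abs_of_pos (one_pos.trans_le hΓ)]
    exact inv_le_one_of_one_le₀ hΓ
  obtain ⟨C, hC⟩ :=
    IsBoundedUnder.bddAbove_range (isBoundedUnder_of_eventually_le hev)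
  exact ⟨C, fun k => hC (mem_range_self k)⟩

/-- The Bessel–Clifford function `C_ν(x) = ∑ x ^ k / (k! Γ(ν + k + 1))`, the entire solution of
`x C'' + (1 + ν) C' = C`; it is `x ^ (-ν / 2) I_ν(2 √x)` for the modified Bessel function `I_ν`. -/
noncomputable def besselClifford (ν x : ℝ) : ℝ :=
  ∑' k : ℕ, (Gamma (ν + k + 1))⁻¹ * (x ^ k / k !)

lemma hasDerivAt_besselClifford (ν x : ℝ) :
    HasDerivAt (besselClifford ν) (besselClifford (ν + 1) x) x := by
  obtain ⟨C, hC⟩ := exists_abs_Gamma_inv_le ν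
  refine (hasDerivAt_tsum_mul_pow_div_factorial hC x).congr_deriv (tsum_congr fun k => ?_)
  rw [Nat.cast_succ, add_right_comm ν 1, ← add_assoc ν]

lemma deriv_besselClifford (ν : ℝ) : deriv (besselClifford ν) = besselClifford (ν + 1) :=
  funext fun x => (hasDerivAt_besselClifford ν x).deriv

lemma contDiff_besselClifford (ν : ℝ) : ContDiff ℝ ∞ (besselClifford ν) := by
  refine contDiff_infty.2 fun n => ?_
  induction n generalizing ν with
  | zero =>
    exact contDiff_zero.2
      (continuous_iff_continuousAt.2 fun x => (hasDerivAt_besselClifford ν x).continuousAt)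
  | succ n ih =>
    rw [Nat.cast_succ, contDiff_succ_iff_deriv, deriv_besselClifford]
    exact ⟨fun x => (hasDerivAt_besselClifford ν x).differentiableAt, by simp, ih (ν + 1)⟩

lemma besselClifford_zero (ν : ℝ) : besselClifford ν 0 = (Gamma (ν + 1))⁻¹ := by
  rw [besselClifford, tsum_eq_single 0 fun k hk => by simp [hk]]
  simp

lemma besselClifford_nonneg {ν x : ℝ} (hν : -1 ≤ ν) (hx : 0 ≤ x) : 0 ≤ besselClifford ν x :=
  tsum_nonneg fun k => mul_nonneg
    (inv_nonneg.2 (Real.Gamma_nonneg_of_nonneg (by linarith [k.cast_nonneg (α := ℝ)])))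
    (by positivity)

lemma monotoneOn_besselClifford {ν : ℝ} (hν : -2 ≤ ν) : MonotoneOn (besselClifford ν) (Ici 0) := by
  have hC := contDiff_besselClifford ν
  refine monotoneOn_of_deriv_nonneg (convex_Ici 0) hC.continuous.continuousOn
    (hC.differentiable (by simp)).differentiableOn fun x hx => ?_
  rw [interior_Ici] at hx
  rw [deriv_besselClifford]
  exact besselClifford_nonneg (by linarith) hx.le

lemma besselClifford_pos {ν x : ℝ} (hν : -1 < ν) (hx : 0 ≤ x) : 0 < besselClifford ν x := by
  refine lt_of_lt_of_le ?_ (monotoneOn_besselClifford (by linarith) self_mem_Ici hx hx)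
  rw [besselClifford_zero]
  exact inv_pos.2 (Real.Gamma_pos_of_pos (by linarith))

lemma besselClifford_contiguity (ν x : ℝ) :
    x * besselClifford (ν + 1) x + ν * besselClifford ν x = besselClifford (ν - 1) x := by
  obtain ⟨C₁, hC₁⟩ := exists_abs_Gamma_inv_le ν
  obtain ⟨C₀, hC₀⟩ := exists_abs_Gamma_inv_le (ν - 1)
  have hs₁ := (summable_mul_pow_div_factorial hC₁ x).mul_left ν
  have hs₀ := summable_mul_pow_div_factorial hC₀ x
  have hterm (k : ℕ) : (Gamma (ν - 1 + k + 1))⁻¹ * (x ^ k / k !) -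
      ν * ((Gamma (ν + k + 1))⁻¹ * (x ^ k / k !)) =
      k * ((Gamma (ν + k + 1))⁻¹ * (x ^ k / k !)) := by
    rw [show ν - 1 + k + 1 = ν + k by ring, ← mul_Gamma_add_one_inv (ν + k)]
    ring
  have hshift : ∑' k : ℕ, k * ((Gamma (ν + k + 1))⁻¹ * (x ^ k / k !)) =
      x * besselClifford (ν + 1) x := by
    rw [((hs₀.sub hs₁).congr hterm).tsum_eq_zero_add, Nat.cast_zero, zero_mul, zero_add,
      besselClifford, ← tsum_mul_left]
    refine tsum_congr fun k => ?_
    rw [mul_left_comm, pow_succ', mul_div_assoc x, mul_left_comm _ x, succ_mul_pow_div_factorial,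
      Nat.cast_succ, show ν + (k + 1) + 1 = ν + 1 + k + 1 by ring]
    ring
  rw [← hshift, ← tsum_congr hterm, hs₀.tsum_sub hs₁, tsum_mul_left]
  exact sub_add_cancel _ _

lemma besselClifford_wronskian (ν x : ℝ) :
    besselClifford (-ν) x * besselClifford (ν - 1) x -
      x * besselClifford (1 - ν) x * besselClifford ν x = (Gamma (1 - ν))⁻¹ * (Gamma ν)⁻¹ := by
  set W : ℝ → ℝ := fun x => besselClifford (-ν) x * besselClifford (ν - 1) x -
    x * besselClifford (1 - ν) x * besselClifford ν x
  have hderiv (x : ℝ) : HasDerivAt W 0 x := by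
    have hneg := besselClifford_contiguity (1 - ν) x
    have hpos := besselClifford_contiguity ν x
    rw [show 1 - ν + 1 = 2 - ν by ring, show 1 - ν - 1 = -ν by ring] at hneg
    have h₁ : HasDerivAt (besselClifford (-ν)) (besselClifford (1 - ν) x) x := by
      simpa only [neg_add_eq_sub] using hasDerivAt_besselClifford (-ν) x
    have h₂ : HasDerivAt (besselClifford (ν - 1)) (besselClifford ν x) x := by
      simpa only [sub_add_cancel] using hasDerivAt_besselClifford (ν - 1) x
    have h₃ : HasDerivAt (besselClifford (1 - ν)) (besselClifford (2 - ν) x) x := by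
      simpa only [sub_add_eq_add_sub, one_add_one_eq_two] using hasDerivAt_besselClifford (1 - ν) x
    have h₄ := hasDerivAt_besselClifford ν x
    refine ((h₁.mul h₂).sub (((hasDerivAt_id x).mul h₃).mul h₄)).congr_deriv ?_
    simp only [Pi.mul_apply, id_eq]
    linear_combination -besselClifford ν x * hneg - besselClifford (1 - ν) x * hpos
  calc W x = W 0 := is_const_of_deriv_eq_zero (fun x => (hderiv x).differentiableAt)
        (fun x => (hderiv x).deriv) x 0
    _ = (Gamma (1 - ν))⁻¹ * (Gamma ν)⁻¹ := by
      simp only [W, besselClifford_zero, neg_add_eq_sub, sub_add_cancel, zero_mul, sub_zero]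

lemma hasDerivAt_rpow_mul_besselClifford (ν : ℝ) {x : ℝ} (hx : 0 < x) :
    HasDerivAt (fun x => x ^ ν * besselClifford ν x)
      (x ^ (ν - 1) * besselClifford (ν - 1) x) x := by
  refine ((Real.hasDerivAt_rpow_const (.inl hx.ne')).mul
    (hasDerivAt_besselClifford ν x)).congr_deriv ?_
  have hpow : x ^ ν = x ^ (ν - 1) * x := by rw [← Real.rpow_add_one hx.ne', sub_add_cancel]
  linear_combination x ^ (ν - 1) * besselClifford_contiguity ν x + besselClifford (ν + 1) x * hpow

end BesselClifford

/-! ### The decaying solution of the Bessel–Clifford equation -/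

section SecondDerivative

variable {f g : ℝ → ℝ} {x : ℝ}

lemma iteratedDeriv_two_mul (hf : ContDiffAt ℝ 2 f x) (hg : ContDiffAt ℝ 2 g x) :
    iteratedDeriv 2 (fun x => f x * g x) x =
      iteratedDeriv 2 f x * g x + 2 * deriv f x * deriv g x + f x * iteratedDeriv 2 g x := by
  rw [iteratedDeriv_fun_mul hf hg]
  simp only [Finset.sum_range_succ, Finset.range_one, Finset.sum_singleton, Nat.choose_zero_right,
    Nat.choose_one_right, Nat.choose_self, iteratedDeriv_zero, iteratedDeriv_one, Nat.sub_self,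
    Nat.sub_zero, Nat.add_one_sub_one]
  push_cast
  ring

lemma iteratedDeriv_two_rpow (s x : ℝ) :
    iteratedDeriv 2 (fun x : ℝ => x ^ s) x = s * (s - 1) * x ^ (s - 2) := by
  rw [iteratedDeriv_eq_iterate, Real.iter_deriv_rpow_const]
  simp [descPochhammer_succ_right]

lemma hasDerivAt_deriv_of_contDiffAt (hf : ContDiffAt ℝ 2 f x) :
    HasDerivAt (deriv f) (iteratedDeriv 2 f x) x := by
  rw [iteratedDeriv_succ, iteratedDeriv_one]
  exact ((hf.derivWithin (m := 1) (by norm_num)).differentiableAt one_ne_zero).hasDerivAt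

end SecondDerivative

section BesselOp

/-- The Bessel–Clifford operator `f ↦ w f'' + (1 + ν) f' - f`, annihilating `besselClifford ν`. -/
noncomputable def besselOp (ν : ℝ) (f : ℝ → ℝ) (w : ℝ) : ℝ :=
  w * iteratedDeriv 2 f w + (1 + ν) * deriv f w - f w

lemma besselOp_besselClifford (ν w : ℝ) : besselOp ν (besselClifford ν) w = 0 := by
  have hcont := besselClifford_contiguity (ν + 1) w
  rw [add_sub_cancel_right] at hcont
  rw [besselOp, iteratedDeriv_succ, iteratedDeriv_one, deriv_besselClifford, deriv_besselClifford]
  linear_combination hcont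

variable {ν w : ℝ} {f g : ℝ → ℝ}

lemma besselOp_congr (h : f =ᶠ[𝓝 w] g) : besselOp ν f w = besselOp ν g w := by
  rw [besselOp, besselOp, h.iteratedDeriv_eq, h.deriv_eq, h.eq_of_nhds]

lemma besselOp_const_mul (c : ℝ) : besselOp ν (fun w => c * f w) w = c * besselOp ν f w := by
  rw [besselOp, besselOp, iteratedDeriv_const_mul_field, deriv_const_mul_field]
  ring

lemma besselOp_sub (hf : ContDiffAt ℝ 2 f w) (hg : ContDiffAt ℝ 2 g w) :
    besselOp ν (fun w => f w - g w) w = besselOp ν f w - besselOp ν g w := by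
  rw [besselOp, besselOp, besselOp, iteratedDeriv_fun_sub hf hg,
    deriv_fun_sub (hf.differentiableAt two_ne_zero) (hg.differentiableAt two_ne_zero)]
  ring

lemma besselOp_rpow_neg_mul (hf : ContDiffAt ℝ 2 f w) (hw : 0 < w) :
    besselOp ν (fun w => w ^ (-ν) * f w) w = w ^ (-ν) * besselOp (-ν) f w := by
  have hpow : ContDiffAt ℝ 2 (fun w : ℝ => w ^ (-ν)) w := Real.contDiffAt_rpow_const_of_ne hw.ne'
  have h₁ : w ^ (-ν) = w ^ (-ν - 1) * w := by rw [← Real.rpow_add_one hw.ne', sub_add_cancel]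
  have h₂ : w ^ (-ν - 1) = w ^ (-ν - 2) * w := by
    rw [← Real.rpow_add_one hw.ne']; ring_nf
  rw [besselOp, besselOp, iteratedDeriv_two_mul hpow hf, iteratedDeriv_two_rpow,
    deriv_fun_mul (hpow.differentiableAt two_ne_zero) (hf.differentiableAt two_ne_zero),
    Real.deriv_rpow_const, h₁, h₂]
  ring

end BesselOp

lemma exists_forall_mem_Icc_of_monotoneOn_of_antitoneOn {α β : Type*} [LinearOrder α]
    [ConditionallyCompleteLattice β] {s : Set α} {f g : α → β} (hs : s.Nonempty)
    (hf : MonotoneOn f s) (hg : AntitoneOn g s) (hfg : ∀ x ∈ s, f x ≤ g x) :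
    ∃ c, ∀ x ∈ s, c ∈ Icc (f x) (g x) := by
  have hle : ∀ a ∈ f '' s, ∀ b ∈ g '' s, a ≤ b := by
    rintro _ ⟨x, hx, rfl⟩ _ ⟨y, hy, rfl⟩
    rcases le_total x y with hxy | hyx
    · exact (hf hx hy hxy).trans (hfg y hy)
    · exact (hfg x hx).trans (hg hy hx hyx)
  obtain ⟨c, hfc, hcg⟩ := exists_between_of_forall_le (hs.image f) (hs.image g) hle
  exact ⟨c, fun x hx => ⟨hfc (mem_image_of_mem f hx), hcg (mem_image_of_mem g hx)⟩⟩

section DecayingCombination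

variable {γ : ℝ}

lemma rpow_mul_besselClifford_pos (hγ : 0 < γ) {w : ℝ} (hw : 0 < w) :
    0 < w ^ γ * besselClifford γ w :=
  mul_pos (Real.rpow_pos_of_pos hw γ) (besselClifford_pos (by linarith) hw.le)

lemma hasDerivAt_besselClifford_ratio (hγ : 0 < γ) (hΓ : Gamma (1 - γ) ≠ 0) {w : ℝ} (hw : 0 < w) :
    HasDerivAt
      (fun w => Gamma (1 - γ) * besselClifford (-γ) w / (w ^ γ * besselClifford γ w))
      (-(w ^ (γ - 1) * besselClifford (γ - 1) 0) / (w ^ γ * besselClifford γ w) ^ 2) w := by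
  have hA : HasDerivAt (besselClifford (-γ)) (besselClifford (1 - γ) w) w := by
    simpa only [neg_add_eq_sub] using hasDerivAt_besselClifford (-γ) w
  have hpow : w ^ γ = w ^ (γ - 1) * w := by rw [← Real.rpow_add_one hw.ne', sub_add_cancel]
  refine ((hA.const_mul _).div (hasDerivAt_rpow_mul_besselClifford γ hw)
    (rpow_mul_besselClifford_pos hγ hw).ne').congr_deriv ?_
  congr 1
  have hW := congr_arg (Gamma (1 - γ) * ·) (besselClifford_wronskian γ w)
  simp only [mul_inv_cancel_left₀ hΓ] at hW
  rw [besselClifford_zero, sub_add_cancel]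
  linear_combination
    Gamma (1 - γ) * besselClifford (1 - γ) w * besselClifford γ w * hpow - w ^ (γ - 1) * hW

lemma antitoneOn_besselClifford_ratio (hγ : 0 < γ) (hΓ : Gamma (1 - γ) ≠ 0) :
    AntitoneOn (fun w => Gamma (1 - γ) * besselClifford (-γ) w / (w ^ γ * besselClifford γ w))
      (Ioi 0) := by
  refine antitoneOn_of_hasDerivWithinAt_nonpos (convex_Ioi 0)
    (fun w hw => (hasDerivAt_besselClifford_ratio hγ hΓ hw).continuousAt.continuousWithinAt)
    (fun w hw => (hasDerivAt_besselClifford_ratio hγ hΓ (interior_subset hw)).hasDerivWithinAt)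
    fun w hw => ?_
  have hw : 0 < w := interior_subset hw
  have := besselClifford_pos (ν := γ - 1) (by linarith) le_rfl
  exact div_nonpos_of_nonpos_of_nonneg (neg_nonpos.2 (by positivity)) (sq_nonneg _)

lemma monotoneOn_besselClifford_ratio_sub_inv (hγ : 0 < γ) (hΓ : Gamma (1 - γ) ≠ 0) :
    MonotoneOn
      (fun w => Gamma (1 - γ) * besselClifford (-γ) w / (w ^ γ * besselClifford γ w) -
        (w ^ γ * besselClifford γ w)⁻¹) (Ioi 0) := by
  have hderiv (w : ℝ) (hw : 0 < w) := (hasDerivAt_besselClifford_ratio hγ hΓ hw).sub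
    ((hasDerivAt_rpow_mul_besselClifford γ hw).inv (rpow_mul_besselClifford_pos hγ hw).ne')
  refine monotoneOn_of_hasDerivWithinAt_nonneg (convex_Ioi 0)
    (fun w hw => (hderiv w hw).continuousAt.continuousWithinAt)
    (fun w hw => (hderiv w (interior_subset hw)).hasDerivWithinAt) fun w hw => ?_
  have hw : 0 < w := interior_subset hw
  have hmono := monotoneOn_besselClifford (ν := γ - 1) (by linarith) self_mem_Ici hw.le hw.le
  rw [← sub_div, neg_sub_neg, ← mul_sub]
  exact div_nonneg (mul_nonneg (by positivity) (sub_nonneg.2 hmono)) (sq_nonneg _)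

lemma exists_besselClifford_combination_mem_Icc (hγ : 0 < γ) (hΓ : Gamma (1 - γ) ≠ 0) :
    ∃ c, ∀ w, 0 < w →
      w ^ (-γ) * (Gamma (1 - γ) * besselClifford (-γ) w) - c * besselClifford γ w ∈
        Icc 0 (w ^ (-γ)) := by
  obtain ⟨c, hc⟩ := exists_forall_mem_Icc_of_monotoneOn_of_antitoneOn nonempty_Ioi
    (monotoneOn_besselClifford_ratio_sub_inv hγ hΓ) (antitoneOn_besselClifford_ratio hγ hΓ)
    fun w hw => sub_le_self _ (inv_nonneg.2 (rpow_mul_besselClifford_pos hγ hw).le)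
  refine ⟨c, fun w hw => ?_⟩
  obtain ⟨hlow, hhigh⟩ := hc w hw
  have hD := rpow_mul_besselClifford_pos hγ hw
  set A := Gamma (1 - γ) * besselClifford (-γ) w
  have hpow : 0 < w ^ γ := Real.rpow_pos_of_pos hw γ
  have hnonneg : 0 ≤ A - c * (w ^ γ * besselClifford γ w) := sub_nonneg.2 ((le_div_iff₀ hD).1 hhigh)
  have hle_one : A - c * (w ^ γ * besselClifford γ w) ≤ 1 := by
    rw [inv_eq_one_div, ← sub_div, div_le_iff₀ hD] at hlow
    linarith
  have hfactor : (w ^ γ)⁻¹ * A - c * besselClifford γ w =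
      (w ^ γ)⁻¹ * (A - c * (w ^ γ * besselClifford γ w)) := by
    field_simp
  rw [Real.rpow_neg hw.le, hfactor]
  exact ⟨mul_nonneg (inv_nonneg.2 hpow.le) hnonneg,
    mul_le_of_le_one_right (inv_nonneg.2 hpow.le) hle_one⟩

end DecayingCombination

/-- Nonnegative solutions of the Bessel–Clifford equation of order `ν` on `(0, ∞)` which tend to
`0` at infinity; up to a constant factor, only `w ^ (-ν / 2) K_ν(2 √w)` is one. -/
structure IsDecayingBesselSolution (ν : ℝ) (E : ℝ → ℝ) : Prop where
  contDiffOn : ContDiffOn ℝ ∞ E (Ioi 0)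
  besselOp_eq_zero : ∀ w, 0 < w → besselOp ν E w = 0
  nonneg : ∀ w, 0 < w → 0 ≤ E w
  tendsto_zero : Tendsto E atTop (𝓝 0)

namespace IsDecayingBesselSolution

variable {ν : ℝ} {E : ℝ → ℝ}

lemma contDiffAt (hE : IsDecayingBesselSolution ν E) {w : ℝ} (hw : 0 < w) : ContDiffAt ℝ ∞ E w :=
  hE.contDiffOn.contDiffAt (Ioi_mem_nhds hw)

lemma hasDerivAt (hE : IsDecayingBesselSolution ν E) {w : ℝ} (hw : 0 < w) :
    HasDerivAt E (deriv E w) w :=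
  ((hE.contDiffAt hw).differentiableAt (by simp)).hasDerivAt

lemma hasDerivAt_deriv (hE : IsDecayingBesselSolution ν E) {w : ℝ} (hw : 0 < w) :
    HasDerivAt (deriv E) (iteratedDeriv 2 E w) w :=
  hasDerivAt_deriv_of_contDiffAt ((hE.contDiffAt hw).of_le (by norm_cast))

lemma monotoneOn_rpow_mul_deriv (hE : IsDecayingBesselSolution ν E) :
    MonotoneOn (fun w => w ^ (1 + ν) * deriv E w) (Ioi 0) := by
  have hderiv (w : ℝ) (hw : 0 < w) :
      HasDerivAt (fun w => w ^ (1 + ν) * deriv E w) (w ^ ν * E w) w := by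
    refine ((Real.hasDerivAt_rpow_const (.inl hw.ne')).mul
      (hE.hasDerivAt_deriv hw)).congr_deriv ?_
    have hpow : w ^ (1 + ν) = w ^ ν * w := by rw [add_comm, Real.rpow_add_one hw.ne']
    have hode := hE.besselOp_eq_zero w hw
    rw [besselOp] at hode
    rw [add_sub_cancel_left, hpow]
    linear_combination w ^ ν * hode
  refine monotoneOn_of_hasDerivWithinAt_nonneg (convex_Ioi 0)
    (fun w hw => (hderiv w hw).continuousAt.continuousWithinAt)
    (fun w hw => (hderiv w (interior_subset hw)).hasDerivWithinAt) fun w hw => ?_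
  have hw : 0 < w := interior_subset hw
  exact mul_nonneg (by positivity) (hE.nonneg w hw)

/-- Once `E'` is positive it stays so, which is incompatible with a nonnegative `E` tending to
`0`. -/
lemma deriv_nonpos (hE : IsDecayingBesselSolution ν E) {w : ℝ} (hw : 0 < w) : deriv E w ≤ 0 := by
  by_contra! hpos
  have hderiv_pos (v : ℝ) (hv : w ≤ v) : 0 < deriv E v := by
    have hle := hE.monotoneOn_rpow_mul_deriv hw (hw.trans_le hv) hv
    have hpow : 0 < w ^ (1 + ν) * deriv E w := by positivity
    exact pos_of_mul_pos_right (hpow.trans_le hle) (Real.rpow_nonneg (hw.le.trans hv) _)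
  have hstrict : StrictMonoOn E (Ici w) := by
    refine strictMonoOn_of_deriv_pos (convex_Ici w)
      (fun v hv => (hE.hasDerivAt (hw.trans_le hv)).continuousAt.continuousWithinAt)
      fun v hv => hderiv_pos v (interior_subset hv)
  have hlt : E w < E (w + 1) := hstrict self_mem_Ici (by simp) (by simp)
  have hle : E (w + 1) ≤ 0 := by
    refine ge_of_tendsto hE.tendsto_zero ?_
    filter_upwards [eventually_ge_atTop (w + 1)] with v hv
    exact hstrict.monotoneOn (by simp) (mem_Ici.2 (by linarith)) hv
  linarith [hE.nonneg w hw]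

lemma iteratedDeriv_two_nonneg (hE : IsDecayingBesselSolution ν E) (hν : -1 ≤ ν) {w : ℝ}
    (hw : 0 < w) : 0 ≤ iteratedDeriv 2 E w := by
  have hode := hE.besselOp_eq_zero w hw
  rw [besselOp] at hode
  have hmul : 0 ≤ w * iteratedDeriv 2 E w := by
    have := mul_nonneg (by linarith : 0 ≤ 1 + ν) (neg_nonneg.2 (hE.deriv_nonpos hw))
    linarith [hE.nonneg w hw]
  exact nonneg_of_mul_nonneg_right hmul hw

lemma antitoneOn (hE : IsDecayingBesselSolution ν E) : AntitoneOn E (Ioi 0) :=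
  antitoneOn_of_hasDerivWithinAt_nonpos (convex_Ioi 0) hE.contDiffOn.continuousOn
    (fun _ hw => (hE.hasDerivAt (interior_subset hw)).hasDerivWithinAt)
    fun _ hw => hE.deriv_nonpos (interior_subset hw)

lemma tendsto_deriv (hE : IsDecayingBesselSolution ν E) (hν : -1 ≤ ν) :
    Tendsto (deriv E) atTop (𝓝 0) := by
  have hmono : MonotoneOn (deriv E) (Ioi 0) :=
    monotoneOn_of_hasDerivWithinAt_nonneg (convex_Ioi 0)
      (fun _ hw => (hE.hasDerivAt_deriv hw).continuousAt.continuousWithinAt)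
      (fun _ hw => (hE.hasDerivAt_deriv (interior_subset hw)).hasDerivWithinAt)
      fun _ hw => hE.iteratedDeriv_two_nonneg hν (interior_subset hw)
  have hlower : Tendsto (fun w => -E (w - 1)) atTop (𝓝 0) := by
    simpa [sub_eq_add_neg] using
      (hE.tendsto_zero.comp (tendsto_atTop_add_const_right _ (-1) tendsto_id)).neg
  refine tendsto_of_tendsto_of_tendsto_of_le_of_le' hlower tendsto_const_nhds ?_ ?_
  · filter_upwards [eventually_gt_atTop 1] with w hw
    have hpos (v : ℝ) (hv : v ∈ Icc (w - 1) w) : 0 < v := by linarith [hv.1]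
    obtain ⟨v, hv, hslope⟩ := exists_hasDerivAt_eq_slope E (deriv E) (sub_one_lt w)
      (fun v hv => (hE.hasDerivAt (hpos v hv)).continuousAt.continuousWithinAt)
      fun v hv => hE.hasDerivAt (hpos v (Ioo_subset_Icc_self hv))
    rw [sub_sub_cancel, div_one] at hslope
    have := hmono (hpos v (Ioo_subset_Icc_self hv)) (one_pos.trans hw) hv.2.le
    linarith [hE.nonneg w (one_pos.trans hw)]
  · filter_upwards [eventually_gt_atTop 0] with w hw
    exact hE.deriv_nonpos hw

lemma neg_deriv (hE : IsDecayingBesselSolution ν E) (hν : -1 ≤ ν) :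
    IsDecayingBesselSolution (ν + 1) fun w => -deriv E w where
  contDiffOn := (hE.contDiffOn.deriv_of_isOpen isOpen_Ioi (by simp)).neg
  besselOp_eq_zero w hw := by
    have hE₂ := hE.hasDerivAt_deriv hw
    have hE₃ : HasDerivAt (iteratedDeriv 2 E) (iteratedDeriv 2 (deriv E) w) w := by
      rw [iteratedDeriv_succ (n := 1), iteratedDeriv_one]
      exact hasDerivAt_deriv_of_contDiffAt ((hE.contDiffAt hw).derivWithin (by norm_cast))
    have hode : HasDerivAt (besselOp ν E) (1 * iteratedDeriv 2 E w + w * iteratedDeriv 2 (deriv E) w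
        + (1 + ν) * iteratedDeriv 2 E w - deriv E w) w :=
      (((hasDerivAt_id w).mul hE₃).add (hE₂.const_mul (1 + ν))).sub (hE.hasDerivAt hw)
    have hzero : besselOp ν E =ᶠ[𝓝 w] fun _ => 0 := by
      filter_upwards [Ioi_mem_nhds hw] with v hv using hE.besselOp_eq_zero v hv
    have hdiff := hode.unique ((hasDerivAt_const w 0).congr_of_eventuallyEq hzero)
    rw [besselOp, iteratedDeriv_fun_neg, deriv.fun_neg, hE₂.deriv]
    linear_combination -hdiff
  nonneg w hw := neg_nonneg.2 (hE.deriv_nonpos hw)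
  tendsto_zero := by simpa only [neg_zero] using (hE.tendsto_deriv hν).neg

lemma exists_abs_iteratedDeriv_le (hE : IsDecayingBesselSolution ν E) (hν : -1 ≤ ν) (n : ℕ) :
    ∃ C, ∀ w, 1 ≤ w → |iteratedDeriv n E w| ≤ C := by
  induction n generalizing ν E with
  | zero =>
    refine ⟨E 1, fun w hw => ?_⟩
    have hw₀ : 0 < w := one_pos.trans_le hw
    rw [iteratedDeriv_zero, abs_of_nonneg (hE.nonneg w hw₀)]
    exact hE.antitoneOn (mem_Ioi.2 one_pos) hw₀ hw
  | succ n ih =>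
    simpa only [iteratedDeriv_succ', iteratedDeriv_fun_neg, abs_neg]
      using ih (hE.neg_deriv hν) (by linarith)

end IsDecayingBesselSolution

lemma exists_isDecayingBesselSolution {γ : ℝ} (hγ : 0 < γ) (hΓ : Gamma (1 - γ) ≠ 0) :
    ∃ c, IsDecayingBesselSolution γ fun w =>
      w ^ (-γ) * (Gamma (1 - γ) * besselClifford (-γ) w) - c * besselClifford γ w := by
  obtain ⟨c, hc⟩ := exists_besselClifford_combination_mem_Icc hγ hΓ
  have hA : ContDiff ℝ ∞ fun w => Gamma (1 - γ) * besselClifford (-γ) w :=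
    contDiff_const.mul (contDiff_besselClifford _)
  have hB : ContDiff ℝ ∞ fun w => c * besselClifford γ w :=
    contDiff_const.mul (contDiff_besselClifford _)
  have hpow {w : ℝ} (hw : 0 < w) : ContDiffAt ℝ ∞ (fun w : ℝ => w ^ (-γ)) w :=
    Real.contDiffAt_rpow_const_of_ne hw.ne'
  refine ⟨c, fun w hw => ?_, fun w hw => ?_, fun w hw => (hc w hw).1, ?_⟩
  · exact (((hpow hw).mul hA.contDiffAt).sub hB.contDiffAt).contDiffWithinAt
  · have h₂ : (2 : WithTop ℕ∞) ≤ ∞ := by norm_cast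
    rw [besselOp_sub (((hpow hw).mul hA.contDiffAt).of_le h₂) (hB.contDiffAt.of_le h₂),
      besselOp_rpow_neg_mul (hA.contDiffAt.of_le h₂) hw, besselOp_const_mul, besselOp_const_mul,
      besselOp_besselClifford, besselOp_besselClifford]
    ring
  · refine tendsto_of_tendsto_of_tendsto_of_le_of_le' tendsto_const_nhds
      (tendsto_rpow_neg_atTop hγ) ?_ ?_
    all_goals filter_upwards [eventually_gt_atTop 0] with w hw
    exacts [(hc w hw).1, (hc w hw).2]

section Profile

lemma hasTemperateGrowth_of_bounded_tails {f : ℝ → ℝ} (hf : ContDiff ℝ ∞ f) (R : ℝ)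
    (htail : ∀ n, ∃ C, ∀ w, R ≤ |w| → |iteratedDeriv n f w| ≤ C) : f.HasTemperateGrowth := by
  refine ⟨hf, fun n => ?_⟩
  obtain ⟨C₁, hC₁⟩ := htail n
  obtain ⟨C₂, hC₂⟩ := (isCompact_closedBall (0 : ℝ) R).exists_bound_of_continuousOn
    (hf.continuous_iteratedDeriv n (by norm_cast; exact le_top)).continuousOn
  refine ⟨0, max C₁ C₂, fun w => ?_⟩
  rw [norm_iteratedFDeriv_eq_norm_iteratedDeriv, pow_zero, mul_one]
  rcases le_total R |w| with hw | hw
  · exact (hC₁ w hw).trans (le_max_left _ _)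
  · exact (hC₂ w (mem_closedBall_zero_iff.2 hw)).trans (le_max_right _ _)

lemma hasTemperateGrowth_smoothTransition_mul {E : ℝ → ℝ} (hE : ContDiffOn ℝ ∞ E (Ioi 0))
    (hbound : ∀ n, ∃ C, ∀ w, 1 ≤ w → |iteratedDeriv n E w| ≤ C) :
    (fun w => smoothTransition (w - 1) * E w).HasTemperateGrowth := by
  have hzero {w : ℝ} (hw : w < 1) : (fun w => smoothTransition (w - 1) * E w) =ᶠ[𝓝 w] 0 := by
    filter_upwards [Iio_mem_nhds hw] with v hv
    rw [smoothTransition.zero_of_nonpos (sub_nonpos.2 (le_of_lt hv)), zero_mul, Pi.zero_apply]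
  have hone {w : ℝ} (hw : 2 < w) : (fun w => smoothTransition (w - 1) * E w) =ᶠ[𝓝 w] E := by
    filter_upwards [Ioi_mem_nhds hw] with v hv
    rw [smoothTransition.one_of_one_le (by linarith [mem_Ioi.1 hv]), one_mul]
  refine hasTemperateGrowth_of_bounded_tails (contDiff_iff_contDiffAt.2 fun w => ?_) 3 fun n => ?_
  · rcases lt_or_ge w 1 with hw | hw
    · exact contDiffAt_const.congr_of_eventuallyEq (hzero hw)
    · exact (smoothTransition.contDiffAt.comp w (contDiffAt_id.sub contDiffAt_const)).mul
        (hE.contDiffAt (Ioi_mem_nhds (one_pos.trans_le hw)))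
  · obtain ⟨C, hC⟩ := hbound n
    refine ⟨C, fun w hw => ?_⟩
    have hC₀ : 0 ≤ C := (abs_nonneg _).trans (hC 1 le_rfl)
    rcases le_abs.1 hw with hw | hw
    · rw [(hone (by linarith)).iteratedDeriv_eq]
      exact hC w (by linarith)
    · rw [(hzero (by linarith)).iteratedDeriv_eq]
      simpa [iteratedDeriv_const] using hC₀

lemma exists_hasCompactSupport_eq_one_sub_smoothTransition :
    ∃ χ : ℝ → ℝ, ContDiff ℝ ∞ χ ∧ HasCompactSupport χ ∧
      ∀ w, 0 ≤ w → χ w = 1 - smoothTransition (w - 1) := by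
  have hsmooth (s : ℝ) : ContDiff ℝ ∞ fun w => smoothTransition (w + s) :=
    smoothTransition.contDiff.comp (contDiff_id.add contDiff_const)
  refine ⟨fun w => smoothTransition (w + 1) * (1 - smoothTransition (w - 1)),
    (hsmooth 1).mul (contDiff_const.sub (hsmooth (-1))), ?_, fun w hw => ?_⟩
  · refine .intro (isCompact_Icc (a := -1) (b := 2)) fun w hw => ?_
    rcases not_and_or.1 hw with hw | hw
    · simp [smoothTransition.zero_of_nonpos (by linarith : w + 1 ≤ 0)]
    · simp [smoothTransition.one_of_one_le (by linarith : 1 ≤ w - 1)]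
  · beta_reduce
    rw [smoothTransition.one_of_one_le (by linarith : 1 ≤ w + 1), one_mul]

/-- A pair of functions on `ℝ` of temperate growth such that `w ↦ a w + w ^ γ * b w` equals `1` at
`0` and is annihilated by `besselOp (-γ)` for `w > 0`; the equation is stated through the
conjugation of `besselOp (-γ)` into `besselOp γ` by `w ^ γ`. At `w = π² |ξ|² y²` it is the Fourier
multiplier of a Poisson kernel of hyperbolic space. -/
structure IsPoissonProfile (γ : ℝ) (a b : ℝ → ℝ) : Prop where
  temperate_left : a.HasTemperateGrowth
  temperate_right : b.HasTemperateGrowth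
  left_zero : a 0 = 1
  besselOp_add : ∀ w, 0 < w → besselOp (-γ) a w + w ^ γ * besselOp γ b w = 0

lemma exists_isPoissonProfile {γ : ℝ} (hγ : 0 < γ) (hΓ : Gamma (1 - γ) ≠ 0) :
    ∃ a b, IsPoissonProfile γ a b := by
  obtain ⟨c, hE⟩ := exists_isDecayingBesselSolution hγ hΓ
  set E : ℝ → ℝ := fun w =>
    w ^ (-γ) * (Gamma (1 - γ) * besselClifford (-γ) w) - c * besselClifford γ w
  obtain ⟨χ, hχ, hχ_supp, hχ_eq⟩ := exists_hasCompactSupport_eq_one_sub_smoothTransition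
  have hχ_temperate (ν : ℝ) : (fun w => χ w * besselClifford ν w).HasTemperateGrowth :=
    hχ_supp.mul_right.hasTemperateGrowth (hχ.mul (contDiff_besselClifford ν))
  have ha : (fun w => Gamma (1 - γ) * (χ w * besselClifford (-γ) w)).HasTemperateGrowth :=
    (HasTemperateGrowth.const _).mul (hχ_temperate _)
  -- Where `χ = 1` the two summands of `E` are separated; where `χ = 0` all of `E` goes into `b`.
  refine ⟨_, fun w => smoothTransition (w - 1) * E w - c * (χ w * besselClifford γ w), ha,
    (hasTemperateGrowth_smoothTransition_mul hE.contDiffOn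
      (hE.exists_abs_iteratedDeriv_le (by linarith))).sub
      ((HasTemperateGrowth.const c).mul (hχ_temperate γ)), ?_, fun w hw => ?_⟩
  · rw [besselClifford_zero, neg_add_eq_sub]
    simp [hχ_eq, smoothTransition.zero_of_nonpos, hΓ]
  · have hb : (fun w => smoothTransition (w - 1) * E w - c * (χ w * besselClifford γ w)) =ᶠ[𝓝 w]
        fun w => E w - w ^ (-γ) * (Gamma (1 - γ) * (χ w * besselClifford (-γ) w)) := by
      filter_upwards [Ioi_mem_nhds hw] with v hv
      simp only [E, hχ_eq v (le_of_lt hv)]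
      ring
    have h₂ : (2 : WithTop ℕ∞) ≤ ∞ := by norm_cast
    have ha₂ : ContDiffAt ℝ 2 (fun w => Gamma (1 - γ) * (χ w * besselClifford (-γ) w)) w :=
      ha.1.contDiffAt.of_le h₂
    rw [besselOp_congr hb, besselOp_sub ((hE.contDiffAt hw).of_le h₂)
      ((Real.contDiffAt_rpow_const_of_ne hw.ne').mul ha₂), besselOp_rpow_neg_mul ha₂ hw,
      hE.besselOp_eq_zero w hw, zero_sub, mul_neg, ← mul_assoc, ← Real.rpow_add hw,
      add_neg_cancel, Real.rpow_zero, one_mul, add_neg_cancel]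

end Profile

/-! ### Integrals of functions of temperate growth -/

section TemperateGrowth

variable {D E F : Type*} [NormedAddCommGroup D] [NormedSpace ℝ D] [NormedAddCommGroup E]
  [NormedSpace ℝ E] [NormedAddCommGroup F] [NormedSpace ℝ F]

lemma hasTemperateGrowth_fderiv {f : D → E} (hf : f.HasTemperateGrowth) :
    (fderiv ℝ f).HasTemperateGrowth := by
  refine ⟨hf.1.fderiv_right (by simp), fun n => ?_⟩
  obtain ⟨k, C, h⟩ := hf.2 (n + 1)
  exact ⟨k, C, fun x => norm_iteratedFDeriv_fderiv (𝕜 := ℝ) (f := f) ▸ h x⟩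

lemma hasTemperateGrowth_fderiv_apply {f : D → E} (hf : f.HasTemperateGrowth) (v : D) :
    (fun x => fderiv ℝ f x v).HasTemperateGrowth :=
  (ContinuousLinearMap.apply ℝ E v).hasTemperateGrowth.comp (hasTemperateGrowth_fderiv hf)

lemma exists_norm_le_of_hasTemperateGrowth {f : D → E} (hf : f.HasTemperateGrowth) :
    ∃ (k : ℕ) (C : ℝ), 0 ≤ C ∧ ∀ x, ‖f x‖ ≤ C * (1 + ‖x‖) ^ k := by
  obtain ⟨k, C, hC, h⟩ := hf.norm_iteratedFDeriv_le_uniform 0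
  exact ⟨k, C, hC, fun x => by simpa using h 0 le_rfl x⟩

lemma exists_norm_prodMk_le_of_hasTemperateGrowth {Ψ : D × E → F} (hΨ : Ψ.HasTemperateGrowth)
    (R : ℝ) : ∃ (k : ℕ) (C : ℝ), ∀ p ξ, ‖p‖ ≤ R → ‖Ψ (p, ξ)‖ ≤ C * (1 + ‖ξ‖) ^ k := by
  obtain ⟨k, C, hC, h⟩ := exists_norm_le_of_hasTemperateGrowth hΨ
  refine ⟨k, C * (1 + R) ^ k, fun p ξ hp => (h _).trans ?_⟩
  have hle : 1 + ‖(p, ξ)‖ ≤ (1 + R) * (1 + ‖ξ‖) := by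
    have h₁ : ‖(p, ξ)‖ ≤ ‖p‖ + ‖ξ‖ := max_le_add_of_nonneg (norm_nonneg _) (norm_nonneg _)
    nlinarith [norm_nonneg p, norm_nonneg ξ]
  calc C * (1 + ‖(p, ξ)‖) ^ k ≤ C * ((1 + R) * (1 + ‖ξ‖)) ^ k := by gcongr
    _ = C * (1 + R) ^ k * (1 + ‖ξ‖) ^ k := by rw [mul_pow, mul_assoc]

variable {Ψ : D → E → F}

lemma hasTemperateGrowth_uncurry_comp_clm {D' : Type*} [NormedAddCommGroup D'] [NormedSpace ℝ D']
    (hΨ : (uncurry Ψ).HasTemperateGrowth) (T : D' →L[ℝ] D) :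
    (uncurry fun p ξ => Ψ (T p) ξ).HasTemperateGrowth :=
  hΨ.comp (T.prodMap (.id ℝ E)).hasTemperateGrowth

lemma continuous_of_hasTemperateGrowth_uncurry (hΨ : (uncurry Ψ).HasTemperateGrowth) (p : D) :
    Continuous (Ψ p) :=
  hΨ.1.continuous.comp (Continuous.prodMk_right p)

lemma hasFDerivAt_of_hasTemperateGrowth_uncurry (hΨ : (uncurry Ψ).HasTemperateGrowth) (p : D)
    (ξ : E) : HasFDerivAt (fun p => Ψ p ξ)
      ((fderiv ℝ (uncurry Ψ) (p, ξ)).comp (.inl ℝ D E)) p :=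
  HasFDerivAt.comp (g := uncurry Ψ) p
    (hΨ.1.differentiable (by simp)).differentiableAt.hasFDerivAt (hasFDerivAt_prodMk_left p ξ)

lemma exists_norm_fderiv_comp_inl_le (hΨ : (uncurry Ψ).HasTemperateGrowth) (R : ℝ) :
    ∃ (k : ℕ) (C : ℝ), ∀ p ξ, ‖p‖ ≤ R →
      ‖(fderiv ℝ (uncurry Ψ) (p, ξ)).comp (.inl ℝ D E)‖ ≤ C * (1 + ‖ξ‖) ^ k := by
  obtain ⟨k, C, hC⟩ := exists_norm_prodMk_le_of_hasTemperateGrowth (hasTemperateGrowth_fderiv hΨ) R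
  refine ⟨k, C, fun p ξ hp => (ContinuousLinearMap.opNorm_comp_le _ _).trans ?_⟩
  exact (mul_le_of_le_one_right (norm_nonneg _)
    (ContinuousLinearMap.norm_inl_le_one ℝ D E)).trans (hC p ξ hp)

lemma hasTemperateGrowth_uncurry_lineDeriv (hΨ : (uncurry Ψ).HasTemperateGrowth) (v : D) :
    (uncurry fun p ξ => lineDeriv ℝ (fun p => Ψ p ξ) p v).HasTemperateGrowth := by
  convert hasTemperateGrowth_fderiv_apply hΨ (v, 0) with ⟨p, ξ⟩
  exact ((hasFDerivAt_of_hasTemperateGrowth_uncurry hΨ p ξ).hasLineDerivAt v).lineDeriv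

lemma hasTemperateGrowth_fourierChar : (fun t : ℝ => (𝐞 t : ℂ)).HasTemperateGrowth := by
  have hderiv (n : ℕ) : iteratedDeriv n (fun t : ℝ => (𝐞 t : ℂ)) =
      fun t => (2 * π * Complex.I) ^ n * 𝐞 t := by
    induction n with
    | zero => simp
    | succ n ih =>
      funext t
      rw [iteratedDeriv_succ, ih, deriv_const_mul_field, Real.deriv_fourierChar, pow_succ]
      ring
  refine ⟨contDiff_of_differentiable_iteratedDeriv fun n _ => ?_, fun n =>
    ⟨0, ‖(2 * π * Complex.I) ^ n‖, fun t => ?_⟩⟩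
  · rw [hderiv]
    exact Real.differentiable_fourierChar.const_mul _
  · rw [norm_iteratedFDeriv_eq_norm_iteratedDeriv, hderiv, norm_mul, Circle.norm_coe, pow_zero]

end TemperateGrowth

/-- The function `m` is integrable against every polynomial weight. -/
def HasAllMoments {V : Type*} [NormedAddCommGroup V] [MeasurableSpace V] (μ : Measure V)
    (m : V → ℂ) : Prop :=
  ∀ k : ℕ, Integrable (fun ξ => (1 + ‖ξ‖) ^ k • m ξ) μ

section Moments

variable {E V : Type*} [NormedAddCommGroup E] [NormedSpace ℝ E]
  [NormedAddCommGroup V] [MeasurableSpace V] {μ : Measure V} {m k : V → ℂ}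

namespace HasAllMoments

lemma integrable (hm : HasAllMoments μ m) : Integrable m μ := by
  simpa using hm 0

lemma add (hm : HasAllMoments μ m) (hk : HasAllMoments μ k) :
    HasAllMoments μ fun ξ => m ξ + k ξ := fun N => by
  simpa only [smul_add] using! (hm N).add (hk N)

lemma const_smul (hm : HasAllMoments μ m) (c : ℝ) : HasAllMoments μ fun ξ => c • m ξ := fun N => by
  simpa only [smul_comm c] using (hm N).fun_smul c

lemma integrable_norm (hm : HasAllMoments μ m) (N : ℕ) :
    Integrable (fun ξ => (1 + ‖ξ‖) ^ N * ‖m ξ‖) μ := by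
  refine (hm N).norm.congr (.of_forall fun ξ => ?_)
  simp only [norm_smul, norm_pow, Real.norm_of_nonneg (by positivity : 0 ≤ 1 + ‖ξ‖)]

lemma integrable_smul [OpensMeasurableSpace V] [SecondCountableTopology V] {G : Type*}
    [NormedAddCommGroup G] [NormedSpace ℂ G] (hm : HasAllMoments μ m) {g : V → G}
    (hg : Continuous g) {N : ℕ} {C : ℝ} (hC : ∀ ξ, ‖g ξ‖ ≤ C * (1 + ‖ξ‖) ^ N) :
    Integrable (fun ξ => m ξ • g ξ) μ := by
  refine ((hm.integrable_norm N).const_mul C).mono'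
    (hm.integrable.aestronglyMeasurable.smul hg.aestronglyMeasurable) (.of_forall fun ξ => ?_)
  calc ‖m ξ • g ξ‖ = ‖g ξ‖ * ‖m ξ‖ := by rw [norm_smul, mul_comm]
    _ ≤ C * (1 + ‖ξ‖) ^ N * ‖m ξ‖ := by gcongr; exact hC ξ
    _ = C * ((1 + ‖ξ‖) ^ N * ‖m ξ‖) := mul_assoc ..

lemma mul [OpensMeasurableSpace V] [SecondCountableTopology V] (hm : HasAllMoments μ m)
    (hk : Continuous k) {N : ℕ} {C : ℝ} (hC : ∀ ξ, ‖k ξ‖ ≤ C * (1 + ‖ξ‖) ^ N) :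
    HasAllMoments μ fun ξ => k ξ * m ξ := fun M => by
  have hbound (ξ : V) : ‖(1 + ‖ξ‖) ^ M • k ξ‖ ≤ C * (1 + ‖ξ‖) ^ (M + N) := by
    rw [norm_smul, norm_pow, Real.norm_of_nonneg (by positivity : 0 ≤ 1 + ‖ξ‖), pow_add,
      mul_left_comm]
    gcongr
    exact hC ξ
  refine (hm.integrable_smul (by fun_prop) hbound).congr (.of_forall fun ξ => ?_)
  simp only [smul_eq_mul, mul_smul_comm, mul_comm]

end HasAllMoments

lemma hasAllMoments_schwartz [NormedSpace ℝ V] [BorelSpace V] [SecondCountableTopology V]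
    [μ.HasTemperateGrowth] (g : 𝓢(V, ℂ)) : HasAllMoments μ g := fun N => by
  have hcont : Continuous fun ξ : V => (1 + ‖ξ‖) ^ N := by fun_prop
  refine ((g.integrable.norm.add (g.integrable_pow_mul μ N)).const_mul (2 ^ (N - 1))).mono'
    (hcont.aestronglyMeasurable.smul g.continuous.aestronglyMeasurable) (.of_forall fun ξ => ?_)
  rw [norm_smul, norm_pow, Real.norm_of_nonneg (by positivity : 0 ≤ 1 + ‖ξ‖)]
  calc (1 + ‖ξ‖) ^ N * ‖g ξ‖ ≤ 2 ^ (N - 1) * (1 ^ N + ‖ξ‖ ^ N) * ‖g ξ‖ := by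
        gcongr; exact add_pow_le zero_le_one (norm_nonneg ξ) N
    _ = 2 ^ (N - 1) * (‖g ξ‖ + ‖ξ‖ ^ N * ‖g ξ‖) := by ring

variable [NormedSpace ℝ V] [SecondCountableTopology V] [OpensMeasurableSpace V] {Ψ : E → V → ℂ}

lemma HasAllMoments.temperate_mul (hm : HasAllMoments μ m) (hΨ : (uncurry Ψ).HasTemperateGrowth)
    (p : E) : HasAllMoments μ fun ξ => Ψ p ξ * m ξ := by
  obtain ⟨k, C, hC⟩ := exists_norm_prodMk_le_of_hasTemperateGrowth hΨ ‖p‖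
  exact hm.mul (continuous_of_hasTemperateGrowth_uncurry hΨ p) fun ξ => hC p ξ le_rfl

lemma integrable_smul_fderiv_comp_inl (hΨ : (uncurry Ψ).HasTemperateGrowth)
    (hm : HasAllMoments μ m) (p : E) :
    Integrable (fun ξ => m ξ • (fderiv ℝ (uncurry Ψ) (p, ξ)).comp (.inl ℝ E V)) μ := by
  obtain ⟨k, C, hC⟩ := exists_norm_fderiv_comp_inl_le hΨ ‖p‖
  exact hm.integrable_smul (((hasTemperateGrowth_fderiv hΨ).1.continuous.comp
    (Continuous.prodMk_right p)).clm_comp continuous_const) fun ξ => hC p ξ le_rfl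

lemma hasFDerivAt_integral_mul (hΨ : (uncurry Ψ).HasTemperateGrowth) (hm : HasAllMoments μ m)
    (p : E) : HasFDerivAt (fun p => ∫ ξ, Ψ p ξ * m ξ ∂μ)
      (∫ ξ, m ξ • (fderiv ℝ (uncurry Ψ) (p, ξ)).comp (.inl ℝ E V) ∂μ) p := by
  obtain ⟨k, C, hC⟩ := exists_norm_fderiv_comp_inl_le hΨ (‖p‖ + 1)
  refine hasFDerivAt_integral_of_dominated_of_fderiv_le
    (F' := fun q ξ => m ξ • (fderiv ℝ (uncurry Ψ) (q, ξ)).comp (.inl ℝ E V))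
    (Metric.ball_mem_nhds p one_pos)
    (.of_forall fun q => (hm.temperate_mul hΨ q).integrable.aestronglyMeasurable)
    (hm.temperate_mul hΨ p).integrable
    (integrable_smul_fderiv_comp_inl hΨ hm p).aestronglyMeasurable (.of_forall fun ξ q hq => ?_)
    ((hm.integrable_norm k).const_mul C) (.of_forall fun ξ q _ =>
      (hasFDerivAt_of_hasTemperateGrowth_uncurry hΨ q ξ).mul_const (m ξ))
  have hq' : ‖q‖ ≤ ‖p‖ + 1 := by
    linarith [norm_le_norm_add_norm_sub' q p, mem_ball_iff_norm.1 hq]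
  rw [norm_smul, mul_comm, ← mul_assoc]
  gcongr
  exact hC q ξ hq'

lemma lineDeriv_integral_mul (hΨ : (uncurry Ψ).HasTemperateGrowth) (hm : HasAllMoments μ m)
    (p v : E) : lineDeriv ℝ (fun p => ∫ ξ, Ψ p ξ * m ξ ∂μ) p v =
      ∫ ξ, lineDeriv ℝ (fun p => Ψ p ξ) p v * m ξ ∂μ := by
  rw [((hasFDerivAt_integral_mul hΨ hm p).hasLineDerivAt v).lineDeriv,
    ContinuousLinearMap.integral_apply (integrable_smul_fderiv_comp_inl hΨ hm p)]
  refine integral_congr_ae (.of_forall fun ξ => ?_)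
  simp only [((hasFDerivAt_of_hasTemperateGrowth_uncurry hΨ p ξ).hasLineDerivAt v).lineDeriv,
    smul_apply, smul_eq_mul, mul_comm]

lemma contDiff_integral_mul [FiniteDimensional ℝ E] (hΨ : (uncurry Ψ).HasTemperateGrowth)
    (hm : HasAllMoments μ m) : ContDiff ℝ ∞ fun p => ∫ ξ, Ψ p ξ * m ξ ∂μ := by
  suffices ∀ n : ℕ, ContDiff ℝ n fun p => ∫ ξ, Ψ p ξ * m ξ ∂μ from contDiff_infty.2 this
  intro n
  induction n generalizing Ψ with
  | zero =>
    exact contDiff_zero.2 <| continuous_iff_continuousAt.2 fun p =>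
      (hasFDerivAt_integral_mul hΨ hm p).continuousAt
  | succ n ih =>
    have hd : Differentiable ℝ fun p => ∫ ξ, Ψ p ξ * m ξ ∂μ := fun p =>
      (hasFDerivAt_integral_mul hΨ hm p).differentiableAt
    rw [Nat.cast_succ]
    refine contDiff_succ_iff_fderiv_apply.2 ⟨hd, by simp, fun v => ?_⟩
    have hv : (fun p => fderiv ℝ (fun p => ∫ ξ, Ψ p ξ * m ξ ∂μ) p v) =
        fun p => ∫ ξ, lineDeriv ℝ (fun p => Ψ p ξ) p v * m ξ ∂μ := by
      funext p
      rw [← (hd p).lineDeriv_eq_fderiv, lineDeriv_integral_mul hΨ hm]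
    exact hv ▸ ih (hasTemperateGrowth_uncurry_lineDeriv hΨ v)

lemma contDiff_re_integral_mul [FiniteDimensional ℝ E] (hΨ : (uncurry Ψ).HasTemperateGrowth)
    (hm : HasAllMoments μ m) : ContDiff ℝ ∞ fun p => (∫ ξ, Ψ p ξ * m ξ ∂μ).re :=
  Complex.reCLM.contDiff.comp (contDiff_integral_mul hΨ hm)

end Moments

/-! ### The hyperbolic Laplacian and the extension operator -/

section LineDeriv

variable {D G H : Type*} [NormedAddCommGroup D] [NormedSpace ℝ D] [NormedAddCommGroup G]
  [NormedSpace ℝ G] [NormedAddCommGroup H] [NormedSpace ℝ H]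

lemma iteratedDeriv_two_comp_add_smul (f : D → G) (x v : D) :
    iteratedDeriv 2 (fun t : ℝ => f (x + t • v)) 0 =
      lineDeriv ℝ (fun z => lineDeriv ℝ f z v) x v := by
  rw [iteratedDeriv_succ, iteratedDeriv_one, lineDeriv]
  congr 1
  funext t
  simp only [lineDeriv, add_assoc, ← add_smul]
  rw [deriv_comp_const_add (fun s : ℝ => f (x + s • v)), add_zero]

lemma deriv_prodMk_eq_lineDeriv (f : D × ℝ → G) (x : D) (y : ℝ) :
    deriv (fun y => f (x, y)) y = lineDeriv ℝ f (x, y) (0, 1) := by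
  simpa [lineDeriv] using (deriv_comp_const_add (fun y => f (x, y)) y 0).symm

lemma iteratedDeriv_two_prodMk_eq_lineDeriv (f : D × ℝ → G) (x : D) (y : ℝ) :
    iteratedDeriv 2 (fun y => f (x, y)) y =
      lineDeriv ℝ (fun p => lineDeriv ℝ f p (0, 1)) (x, y) (0, 1) := by
  rw [iteratedDeriv_succ, iteratedDeriv_one, ← deriv_prodMk_eq_lineDeriv]
  simp only [← deriv_prodMk_eq_lineDeriv]

lemma differentiable_lineDeriv {f : D → G} (hf : ContDiff ℝ 2 f) (v : D) :
    Differentiable ℝ fun x => lineDeriv ℝ f x v := by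
  have heq : (fun x => lineDeriv ℝ f x v) = fun x => fderiv ℝ f x v :=
    funext fun x => (hf.differentiable two_ne_zero x).lineDeriv_eq_fderiv
  rw [heq]
  exact ((hf.fderiv_right (m := 1) le_rfl).clm_apply contDiff_const).differentiable one_ne_zero

lemma lineDeriv_clm_comp (T : G →L[ℝ] H) {f : D → G} (hf : Differentiable ℝ f) (x v : D) :
    lineDeriv ℝ (fun x => T (f x)) x v = T (lineDeriv ℝ f x v) := by
  rw [(hf x).lineDeriv_eq_fderiv]
  exact ((T.hasFDerivAt.comp x (hf x).hasFDerivAt).hasLineDerivAt v).lineDeriv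

end LineDeriv

section HypLap

variable {n : ℕ} {x : EuclideanSpace ℝ (Fin n)} {y : ℝ}

lemma lapX_add {u v : EuclideanSpace ℝ (Fin n) → ℝ → ℝ}
    (hu : ContDiffAt ℝ 2 (fun z => u z y) x) (hv : ContDiffAt ℝ 2 (fun z => v z y) x) :
    lapX (fun x y => u x y + v x y) x y = lapX u x y + lapX v x y := by
  have hcomp {w : EuclideanSpace ℝ (Fin n) → ℝ → ℝ} (hw : ContDiffAt ℝ 2 (fun z => w z y) x)
      (i : Fin n) :
      ContDiffAt ℝ 2 (fun t : ℝ => w (x + t • EuclideanSpace.single i (1 : ℝ)) y) 0 :=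
    ContDiffAt.comp (g := fun z => w z y) 0 (by simpa using hw)
      (by fun_prop)
  rw [lapX, lapX, lapX, ← Finset.sum_add_distrib]
  exact Finset.sum_congr rfl fun i _ => iteratedDeriv_fun_add (hcomp hu i) (hcomp hv i)

lemma hypLap_add {u v : EuclideanSpace ℝ (Fin n) → ℝ → ℝ} (hu : ContDiffAt ℝ 2 (uncurry u) (x, y))
    (hv : ContDiffAt ℝ 2 (uncurry v) (x, y)) :
    hypLap n (fun x y => u x y + v x y) x y = hypLap n u x y + hypLap n v x y := by
  have hx {w : EuclideanSpace ℝ (Fin n) → ℝ → ℝ} (hw : ContDiffAt ℝ 2 (uncurry w) (x, y)) :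
      ContDiffAt ℝ 2 (fun z => w z y) x :=
    hw.comp x (contDiffAt_id.prodMk contDiffAt_const)
  have hy {w : EuclideanSpace ℝ (Fin n) → ℝ → ℝ} (hw : ContDiffAt ℝ 2 (uncurry w) (x, y)) :
      ContDiffAt ℝ 2 (w x) y :=
    hw.comp y (contDiffAt_const.prodMk contDiffAt_id)
  rw [hypLap, hypLap, hypLap, lapX_add (hx hu) (hx hv), iteratedDeriv_fun_add (hy hu) (hy hv),
    deriv_fun_add ((hy hu).differentiableAt two_ne_zero) ((hy hv).differentiableAt two_ne_zero)]
  ring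

/-- The Caffarelli–Silvestre operator `y (Δ_x + ∂_y²) + c ∂_y` on functions of `(x, y)`, the
conjugate of the hyperbolic Laplacian by a power of `y`. Line derivatives are used so that it
applies to vector-valued functions. -/
noncomputable def extensionOp {G : Type*} [NormedAddCommGroup G] [NormedSpace ℝ G] (c : ℝ)
    (F : EuclideanSpace ℝ (Fin n) × ℝ → G) (p : EuclideanSpace ℝ (Fin n) × ℝ) : G :=
  p.2 • (∑ i, lineDeriv ℝ (fun q => lineDeriv ℝ F q (EuclideanSpace.single i 1, 0)) p
      (EuclideanSpace.single i 1, 0) +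
    lineDeriv ℝ (fun q => lineDeriv ℝ F q (0, 1)) p (0, 1)) + c • lineDeriv ℝ F p (0, 1)

lemma hypLap_rpow_mul (s : ℝ) {F : EuclideanSpace ℝ (Fin n) × ℝ → ℝ} (hF : ContDiff ℝ 2 F)
    (hy : 0 < y) : hypLap n (fun x y => y ^ s * F (x, y)) x y =
      y ^ (s + 1) * extensionOp (2 * s - n + 1) F (x, y) + s * (s - n) * (y ^ s * F (x, y)) := by
  have hlap : lapX (fun x y => y ^ s * F (x, y)) x y =
      y ^ s * ∑ i, lineDeriv ℝ (fun q => lineDeriv ℝ F q (EuclideanSpace.single i 1, 0)) (x, y)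
        (EuclideanSpace.single i 1, 0) := by
    rw [lapX, Finset.mul_sum]
    refine Finset.sum_congr rfl fun i _ => ?_
    rw [iteratedDeriv_const_mul_field, ← iteratedDeriv_two_comp_add_smul]
    simp
  have hpow : ContDiffAt ℝ 2 (fun y : ℝ => y ^ s) y := Real.contDiffAt_rpow_const_of_ne hy.ne'
  have hFy : ContDiff ℝ 2 fun y => F (x, y) := by fun_prop
  rw [hypLap, hlap, iteratedDeriv_two_mul hpow hFy.contDiffAt, iteratedDeriv_two_rpow,
    deriv_fun_mul (hpow.differentiableAt two_ne_zero) (hFy.differentiable two_ne_zero y),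
    Real.deriv_rpow_const, iteratedDeriv_two_prodMk_eq_lineDeriv, deriv_prodMk_eq_lineDeriv,
    extensionOp, smul_eq_mul, smul_eq_mul]
  have h₀ : y ^ s = y ^ (s - 2) * y ^ 2 := by rw [← Real.rpow_add_natCast hy.ne']; norm_num
  have h₁ : y ^ (s - 1) = y ^ (s - 2) * y := by rw [← Real.rpow_add_one hy.ne']; ring_nf
  rw [Real.rpow_add_one hy.ne', h₁, h₀]
  ring

lemma neg_hypLap_rpow_mul_add {γ : ℝ} {F G : EuclideanSpace ℝ (Fin n) × ℝ → ℝ}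
    (hF : ContDiff ℝ 2 F) (hG : ContDiff ℝ 2 G) (hy : 0 < y)
    (h : extensionOp (1 - 2 * γ) F (x, y) + y ^ (2 * γ) * extensionOp (1 + 2 * γ) G (x, y) = 0) :
    -hypLap n (fun x y => y ^ ((n : ℝ) / 2 - γ) * F (x, y) + y ^ ((n : ℝ) / 2 + γ) * G (x, y)) x y =
      ((n : ℝ) ^ 2 / 4 - γ ^ 2) *
        (y ^ ((n : ℝ) / 2 - γ) * F (x, y) + y ^ ((n : ℝ) / 2 + γ) * G (x, y)) := by
  have hcd (s : ℝ) {F : EuclideanSpace ℝ (Fin n) × ℝ → ℝ} (hF : ContDiff ℝ 2 F) :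
      ContDiffAt ℝ 2 (uncurry fun x y => y ^ s * F (x, y)) (x, y) :=
    (contDiffAt_snd.rpow_const_of_ne hy.ne').mul hF.contDiffAt
  have hpow : y ^ ((n : ℝ) / 2 + γ + 1) = y ^ ((n : ℝ) / 2 - γ + 1) * y ^ (2 * γ) := by
    rw [← Real.rpow_add hy]; ring_nf
  rw [hypLap_add (hcd _ hF) (hcd _ hG), hypLap_rpow_mul _ hF hy, hypLap_rpow_mul _ hG hy, hpow,
    show 2 * ((n : ℝ) / 2 - γ) - n + 1 = 1 - 2 * γ by ring,
    show 2 * ((n : ℝ) / 2 + γ) - n + 1 = 1 + 2 * γ by ring]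
  linear_combination -y ^ ((n : ℝ) / 2 - γ + 1) * h

end HypLap

section ExtensionOp

variable {n : ℕ} {G H : Type*} [NormedAddCommGroup G] [NormedSpace ℝ G] [NormedAddCommGroup H]
  [NormedSpace ℝ H] (c : ℝ)

lemma extensionOp_clm_comp (T : G →L[ℝ] H) {F : EuclideanSpace ℝ (Fin n) × ℝ → G}
    (hF : ContDiff ℝ 2 F) (p : EuclideanSpace ℝ (Fin n) × ℝ) :
    extensionOp c (fun p => T (F p)) p = T (extensionOp c F p) := by
  simp only [extensionOp, lineDeriv_clm_comp T (hF.differentiable two_ne_zero),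
    lineDeriv_clm_comp T (differentiable_lineDeriv hF _), map_add, map_smul, map_sum]

section Integral

variable {V : Type*} [NormedAddCommGroup V] [NormedSpace ℝ V] [SecondCountableTopology V]
  [MeasurableSpace V] [OpensMeasurableSpace V] {μ : Measure V}
  {Ψ : EuclideanSpace ℝ (Fin n) × ℝ → V → ℂ} {m : V → ℂ}

lemma extensionOp_integral_mul (hΨ : (uncurry Ψ).HasTemperateGrowth) (hm : HasAllMoments μ m)
    (p : EuclideanSpace ℝ (Fin n) × ℝ) :
    extensionOp c (fun p => ∫ ξ, Ψ p ξ * m ξ ∂μ) p =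
      ∫ ξ, extensionOp c (fun p => Ψ p ξ) p * m ξ ∂μ := by
  have hint₁ (v) : Integrable (fun ξ => lineDeriv ℝ (fun q => Ψ q ξ) p v * m ξ) μ :=
    (hm.temperate_mul (hasTemperateGrowth_uncurry_lineDeriv hΨ v) p).integrable
  have hint₂ (v) : Integrable (fun ξ =>
      lineDeriv ℝ (fun r => lineDeriv ℝ (fun q => Ψ q ξ) r v) p v * m ξ) μ :=
    (hm.temperate_mul (hasTemperateGrowth_uncurry_lineDeriv
      (hasTemperateGrowth_uncurry_lineDeriv hΨ v) v) p).integrable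
  simp only [extensionOp, lineDeriv_integral_mul hΨ hm,
    lineDeriv_integral_mul (hasTemperateGrowth_uncurry_lineDeriv hΨ _) hm, add_mul, smul_mul_assoc,
    Finset.sum_mul]
  have hsum := integrable_finsetSum Finset.univ fun i _ => hint₂ (EuclideanSpace.single i 1, 0)
  rw [integral_add ((hsum.fun_add (hint₂ _)).fun_smul _) ((hint₁ _).fun_smul c),
    integral_smul, integral_smul, integral_add hsum (hint₂ _),
    integral_finsetSum _ fun i _ => hint₂ _]

lemma extensionOp_re_integral_mul (hΨ : (uncurry Ψ).HasTemperateGrowth) (hm : HasAllMoments μ m)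
    (p : EuclideanSpace ℝ (Fin n) × ℝ) :
    extensionOp c (fun p => (∫ ξ, Ψ p ξ * m ξ ∂μ).re) p =
      (∫ ξ, extensionOp c (fun p => Ψ p ξ) p * m ξ ∂μ).re := by
  rw [← extensionOp_integral_mul c hΨ hm]
  exact extensionOp_clm_comp c Complex.reCLM
    ((contDiff_integral_mul hΨ hm).of_le (by norm_cast)) p

end Integral

variable {h : ℝ → ℝ} (η : EuclideanSpace ℝ (Fin n)) (p : EuclideanSpace ℝ (Fin n) × ℝ)

lemma lineDeriv_smul_fourierChar_left (h : ℝ → ℝ) (e : EuclideanSpace ℝ (Fin n)) :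
    lineDeriv ℝ (fun q : EuclideanSpace ℝ (Fin n) × ℝ => h q.2 • (𝐞 ⟪q.1, η⟫ : ℂ)) p (e, 0) =
      (2 * π * Complex.I * ⟪e, η⟫) * (h p.2 • (𝐞 ⟪p.1, η⟫ : ℂ)) := by
  have hinner : HasDerivAt (fun t : ℝ => ⟪p.1 + t • e, η⟫) ⟪e, η⟫ 0 := by
    simpa [inner_add_left, inner_smul_left] using
      ((hasDerivAt_id (0 : ℝ)).mul_const ⟪e, η⟫).const_add ⟪p.1, η⟫
  have hchar : HasDerivAt (fun t : ℝ => (𝐞 ⟪p.1 + t • e, η⟫ : ℂ))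
      (⟪e, η⟫ • (2 * π * Complex.I * 𝐞 ⟪p.1, η⟫)) 0 := by
    simpa using! (Real.hasDerivAt_fourierChar _).scomp 0 hinner
  simp only [lineDeriv, Prod.snd_add, Prod.fst_add, Prod.smul_mk, smul_zero, add_zero]
  rw [(hchar.fun_const_smul (h p.2)).deriv]
  simp only [Complex.real_smul]
  ring

lemma lineDeriv_smul_fourierChar_right (hh : Differentiable ℝ h) :
    lineDeriv ℝ (fun q : EuclideanSpace ℝ (Fin n) × ℝ => h q.2 • (𝐞 ⟪q.1, η⟫ : ℂ)) p (0, 1) =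
      deriv h p.2 • (𝐞 ⟪p.1, η⟫ : ℂ) := by
  rw [← Prod.mk.eta (p := p), ← deriv_prodMk_eq_lineDeriv]
  exact (hh.differentiableAt.hasDerivAt.smul_const (𝐞 ⟪p.1, η⟫ : ℂ)).deriv

lemma sum_lineDeriv_smul_fourierChar (h : ℝ → ℝ) :
    ∑ i, lineDeriv ℝ (fun q => lineDeriv ℝ (fun q : EuclideanSpace ℝ (Fin n) × ℝ =>
      h q.2 • (𝐞 ⟪q.1, η⟫ : ℂ)) q (EuclideanSpace.single i 1, 0)) p (EuclideanSpace.single i 1, 0) =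
      -(2 * π * ‖η‖) ^ 2 • (h p.2 • (𝐞 ⟪p.1, η⟫ : ℂ)) := by
  have hterm (e : EuclideanSpace ℝ (Fin n)) :
      lineDeriv ℝ (fun q => lineDeriv ℝ (fun q : EuclideanSpace ℝ (Fin n) × ℝ =>
        h q.2 • (𝐞 ⟪q.1, η⟫ : ℂ)) q (e, 0)) p (e, 0) =
        (-(2 * π) ^ 2 * ⟪e, η⟫ ^ 2) • (h p.2 • (𝐞 ⟪p.1, η⟫ : ℂ)) := by
    simp only [lineDeriv_smul_fourierChar_left]
    have hconst (C : ℂ) (F : EuclideanSpace ℝ (Fin n) × ℝ → ℂ) :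
        lineDeriv ℝ (fun q => C * F q) p (e, 0) = C * lineDeriv ℝ F p (e, 0) :=
      deriv_const_mul_field C
    rw [hconst, lineDeriv_smul_fourierChar_left]
    simp only [Complex.real_smul]
    push_cast
    linear_combination (2 * π * ⟪e, η⟫) ^ 2 * (h p.2 * (𝐞 ⟪p.1, η⟫ : ℂ)) * Complex.I_sq
  simp only [hterm, ← Finset.sum_smul, ← Finset.mul_sum]
  congr 1
  simp [mul_pow, EuclideanSpace.real_norm_sq_eq, EuclideanSpace.inner_single_left]

lemma extensionOp_smul_fourierChar (hh : ContDiff ℝ 2 h) :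
    extensionOp c (fun q : EuclideanSpace ℝ (Fin n) × ℝ => h q.2 • (𝐞 ⟪q.1, η⟫ : ℂ)) p =
      (p.2 * (iteratedDeriv 2 h p.2 - (2 * π * ‖η‖) ^ 2 * h p.2) + c * deriv h p.2) •
        (𝐞 ⟪p.1, η⟫ : ℂ) := by
  have hh' : Differentiable ℝ (deriv h) := fun y =>
    (hasDerivAt_deriv_of_contDiffAt hh.contDiffAt).differentiableAt
  simp only [extensionOp, sum_lineDeriv_smul_fourierChar,
    lineDeriv_smul_fourierChar_right _ _ (hh.differentiable two_ne_zero),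
    lineDeriv_smul_fourierChar_right _ _ hh', smul_smul, ← add_smul, iteratedDeriv_succ,
    iteratedDeriv_zero]
  ring_nf

lemma hasDerivAt_comp_sq_mul {a : ℝ → ℝ} {a' r y : ℝ} (ha : HasDerivAt a a' (y ^ 2 * r)) :
    HasDerivAt (fun y => a (y ^ 2 * r)) (2 * y * r * a') y := by
  have hsq : HasDerivAt (fun y : ℝ => y ^ 2 * r) (2 * y * r) y := by
    simpa using (hasDerivAt_pow 2 y).mul_const r
  exact (ha.comp y hsq).congr_deriv (mul_comm _ _)

lemma deriv_comp_sq_mul {a : ℝ → ℝ} (ha : Differentiable ℝ a) (r y : ℝ) :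
    deriv (fun y => a (y ^ 2 * r)) y = 2 * y * r * deriv a (y ^ 2 * r) :=
  (hasDerivAt_comp_sq_mul (ha _).hasDerivAt).deriv

lemma iteratedDeriv_two_comp_sq_mul {a : ℝ → ℝ} (ha : ContDiff ℝ 2 a) (r y : ℝ) :
    iteratedDeriv 2 (fun y => a (y ^ 2 * r)) y =
      2 * r * deriv a (y ^ 2 * r) + (2 * y * r) ^ 2 * iteratedDeriv 2 a (y ^ 2 * r) := by
  have hlin : HasDerivAt (fun y : ℝ => 2 * y * r) (2 * r) y := by
    simpa using ((hasDerivAt_id y).const_mul 2).mul_const r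
  rw [iteratedDeriv_succ, iteratedDeriv_one,
    funext (deriv_comp_sq_mul (ha.differentiable two_ne_zero) r),
    (hlin.fun_mul
      (hasDerivAt_comp_sq_mul (hasDerivAt_deriv_of_contDiffAt ha.contDiffAt))).deriv]
  ring

lemma extensionOp_comp_sq_mul_smul_fourierChar {a : ℝ → ℝ} (ha : ContDiff ℝ 2 a) (ν : ℝ) :
    extensionOp (1 + 2 * ν) (fun q : EuclideanSpace ℝ (Fin n) × ℝ =>
      a (q.2 ^ 2 * (π * ‖η‖) ^ 2) • (𝐞 ⟪q.1, η⟫ : ℂ)) p =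
      (4 * p.2 * (π * ‖η‖) ^ 2 * besselOp ν a (p.2 ^ 2 * (π * ‖η‖) ^ 2)) •
        (𝐞 ⟪p.1, η⟫ : ℂ) := by
  rw [extensionOp_smul_fourierChar (h := fun y => a (y ^ 2 * (π * ‖η‖) ^ 2)) _ _ _
      (ha.comp ((contDiff_id.pow 2).mul contDiff_const)), besselOp,
    iteratedDeriv_two_comp_sq_mul ha, deriv_comp_sq_mul (ha.differentiable two_ne_zero)]
  ring_nf

end ExtensionOp

/-! ### Fourier multipliers of the Poisson kernel -/

section ExtensionKernel

variable {n : ℕ} {V : Type*} [NormedAddCommGroup V] [NormedSpace ℝ V]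
  (L : V →L[ℝ] EuclideanSpace ℝ (Fin n))

/-- The plane wave of frequency `L ξ` on the half-space `ℝⁿ × (0, ∞)` with profile
`y ↦ a (π² ‖L ξ‖² y²)` in the vertical direction. Evaluating the frequency through a linear map `L`
lets the factors of a product share the frequency variable `ξ`. -/
noncomputable def planeWave (a : ℝ → ℝ) (p : EuclideanSpace ℝ (Fin n) × ℝ) (ξ : V) : ℂ :=
  a (p.2 ^ 2 * (π * ‖L ξ‖) ^ 2) • (𝐞 ⟪p.1, L ξ⟫ : ℂ)

lemma planeWave_boundary {a : ℝ → ℝ} (ha : a 0 = 1) (x : EuclideanSpace ℝ (Fin n)) (ξ : V) :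
    planeWave L a (x, 0) ξ = 𝐞 ⟪x, L ξ⟫ := by
  simp [planeWave, ha]

lemma hasTemperateGrowth_planeWave {a : ℝ → ℝ} (ha : a.HasTemperateGrowth) :
    (uncurry (planeWave L a)).HasTemperateGrowth := by
  have hx : (fun q : (EuclideanSpace ℝ (Fin n) × ℝ) × V => q.1.1).HasTemperateGrowth :=
    ((ContinuousLinearMap.fst ℝ (EuclideanSpace ℝ (Fin n)) ℝ).comp (.fst ℝ _ V)).hasTemperateGrowth
  have hy : (fun q : (EuclideanSpace ℝ (Fin n) × ℝ) × V => q.1.2).HasTemperateGrowth :=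
    ((ContinuousLinearMap.snd ℝ (EuclideanSpace ℝ (Fin n)) ℝ).comp (.fst ℝ _ V)).hasTemperateGrowth
  have hξ : (fun q : (EuclideanSpace ℝ (Fin n) × ℝ) × V => L q.2).HasTemperateGrowth :=
    (L.comp (.snd ℝ (EuclideanSpace ℝ (Fin n) × ℝ) V)).hasTemperateGrowth
  have hw : (fun q : (EuclideanSpace ℝ (Fin n) × ℝ) × V =>
      q.1.2 ^ 2 * (π * ‖L q.2‖) ^ 2).HasTemperateGrowth := by
    simp only [mul_pow]
    exact (hy.pow 2).mul ((HasTemperateGrowth.const _).mul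
      ((hasTemperateGrowth_norm_sq _).comp hξ))
  exact (ha.comp hw).smul
    (hasTemperateGrowth_fourierChar.comp ((innerSL ℝ).bilinear_hasTemperateGrowth hx hξ))

lemma extensionOp_planeWave {a : ℝ → ℝ} (ha : ContDiff ℝ 2 a) (ν : ℝ)
    (p : EuclideanSpace ℝ (Fin n) × ℝ) (ξ : V) :
    extensionOp (1 + 2 * ν) (fun q => planeWave L a q ξ) p =
      (4 * p.2 * (π * ‖L ξ‖) ^ 2) • planeWave L (besselOp ν a) p ξ := by
  simp only [planeWave, extensionOp_comp_sq_mul_smul_fourierChar (L ξ) p ha, mul_smul]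

/-- The Fourier multiplier of the Poisson kernel of `-Δ - (n²/4 - γ²)` on hyperbolic space, as a
combination of plane waves with the profile `w ↦ a w + w ^ γ * b w` at `w = π² ‖L ξ‖² y²`. -/
noncomputable def poissonWave (γ : ℝ) (a b : ℝ → ℝ) (p : EuclideanSpace ℝ (Fin n) × ℝ) (ξ : V) :
    ℂ :=
  p.2 ^ ((n : ℝ) / 2 - γ) • planeWave L a p ξ +
    p.2 ^ ((n : ℝ) / 2 + γ) • ((π * ‖L ξ‖) ^ 2) ^ γ • planeWave L b p ξ

lemma poissonWave_mul (γ : ℝ) (a b : ℝ → ℝ) (p : EuclideanSpace ℝ (Fin n) × ℝ) (ξ : V) (z : ℂ) :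
    poissonWave L γ a b p ξ * z =
      p.2 ^ ((n : ℝ) / 2 - γ) • (planeWave L a p ξ * z) +
        p.2 ^ ((n : ℝ) / 2 + γ) • (planeWave L b p ξ * ((π * ‖L ξ‖) ^ 2) ^ γ • z) := by
  simp only [poissonWave, add_mul, smul_mul_assoc, mul_smul_comm]

lemma IsPoissonProfile.extensionOp_add {γ : ℝ} {a b : ℝ → ℝ} (h : IsPoissonProfile γ a b)
    (x : EuclideanSpace ℝ (Fin n)) {y : ℝ} (hy : 0 < y) (ξ : V) :
    extensionOp (1 - 2 * γ) (fun q => planeWave L a q ξ) (x, y) + y ^ (2 * γ) •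
      ((π * ‖L ξ‖) ^ 2) ^ γ • extensionOp (1 + 2 * γ) (fun q => planeWave L b q ξ) (x, y) = 0 := by
  have h₂ : (2 : WithTop ℕ∞) ≤ ∞ := by norm_cast
  have ha := extensionOp_planeWave L (h.temperate_left.1.of_le h₂) (-γ) (x, y) ξ
  rw [mul_neg, ← sub_eq_add_neg] at ha
  rw [ha, extensionOp_planeWave L (h.temperate_right.1.of_le h₂)]
  rcases eq_or_ne (L ξ) 0 with hL | hL
  · simp [hL]
  have hw : 0 < y ^ 2 * (π * ‖L ξ‖) ^ 2 := by positivity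
  have hpow : (y ^ 2 * (π * ‖L ξ‖) ^ 2) ^ γ = y ^ (2 * γ) * ((π * ‖L ξ‖) ^ 2) ^ γ := by
    rw [Real.mul_rpow (by positivity) (by positivity), ← Real.rpow_natCast_mul hy.le]
    norm_num
  have hprofile := h.besselOp_add _ hw
  rw [hpow] at hprofile
  simp only [planeWave, smul_smul, ← add_smul]
  refine smul_eq_zero_of_left ?_ _
  linear_combination 4 * y * (π * ‖L ξ‖) ^ 2 * hprofile

end ExtensionKernel

section PoissonIntegral

variable {n : ℕ} {V : Type*} [NormedAddCommGroup V] [NormedSpace ℝ V] [SecondCountableTopology V]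
  [MeasurableSpace V] [OpensMeasurableSpace V] {μ : Measure V} {m : V → ℂ}
  (L : V →L[ℝ] EuclideanSpace ℝ (Fin n))

lemma HasAllMoments.rpow_smul {γ : ℝ} (hγ : 0 ≤ γ) (hm : HasAllMoments μ m) :
    HasAllMoments μ fun ξ => ((π * ‖L ξ‖) ^ 2) ^ γ • m ξ := by
  have hcont : Continuous fun ξ => ((π * ‖L ξ‖) ^ 2) ^ γ :=
    Continuous.rpow_const (by fun_prop) fun _ => .inr hγ
  have hbound (ξ : V) :
      ‖((((π * ‖L ξ‖) ^ 2) ^ γ : ℝ) : ℂ)‖ ≤ (π * ‖L‖) ^ (2 * γ) * (1 + ‖ξ‖) ^ ⌈2 * γ⌉₊ := by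
    rw [Complex.norm_real, Real.norm_of_nonneg (by positivity),
      ← Real.rpow_natCast_mul (by positivity)]
    push_cast
    calc (π * ‖L ξ‖) ^ (2 * γ) ≤ (π * ‖L‖ * (1 + ‖ξ‖)) ^ (2 * γ) := by
          rw [mul_assoc]
          gcongr
          exact L.le_opNorm_of_le (by linarith)
      _ = (π * ‖L‖) ^ (2 * γ) * (1 + ‖ξ‖) ^ (2 * γ) :=
          Real.mul_rpow (by positivity) (by positivity)
      _ ≤ (π * ‖L‖) ^ (2 * γ) * (1 + ‖ξ‖) ^ (⌈2 * γ⌉₊ : ℝ) := by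
          gcongr
          · linarith [norm_nonneg ξ]
          · exact Nat.le_ceil _
      _ = (π * ‖L‖) ^ (2 * γ) * (1 + ‖ξ‖) ^ ⌈2 * γ⌉₊ := by rw [Real.rpow_natCast]
  simpa only [Complex.real_smul] using! hm.mul (Complex.continuous_ofReal.comp hcont) hbound

variable {γ : ℝ} {a b : ℝ → ℝ} (hγ : 0 ≤ γ) (h : IsPoissonProfile γ a b) (hm : HasAllMoments μ m)
  (p : EuclideanSpace ℝ (Fin n) × ℝ)
include hm

lemma HasAllMoments.planeWave_mul (ha : a.HasTemperateGrowth) :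
    HasAllMoments μ fun ξ => planeWave L a p ξ * m ξ :=
  hm.temperate_mul (hasTemperateGrowth_planeWave L ha) p

include hγ h

lemma HasAllMoments.poissonWave_mul : HasAllMoments μ fun ξ => poissonWave L γ a b p ξ * m ξ := by
  simp only [_root_.poissonWave_mul]
  exact ((hm.planeWave_mul L p h.temperate_left).const_smul _).add
    (((hm.rpow_smul L hγ).planeWave_mul L p h.temperate_right).const_smul _)

lemma integral_poissonWave_mul :
    ∫ ξ, poissonWave L γ a b p ξ * m ξ ∂μ =
      p.2 ^ ((n : ℝ) / 2 - γ) • ∫ ξ, planeWave L a p ξ * m ξ ∂μ +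
        p.2 ^ ((n : ℝ) / 2 + γ) • ∫ ξ, planeWave L b p ξ * ((π * ‖L ξ‖) ^ 2) ^ γ • m ξ ∂μ := by
  simp only [poissonWave_mul]
  rw [integral_add ((hm.planeWave_mul L p h.temperate_left).const_smul _).integrable
    (((hm.rpow_smul L hγ).planeWave_mul L p h.temperate_right).const_smul _).integrable,
    integral_smul, integral_smul]

lemma neg_hypLap_integral_poissonWave_mul (x : EuclideanSpace ℝ (Fin n)) {y : ℝ} (hy : 0 < y) :
    -hypLap n (fun x y => (∫ ξ, poissonWave L γ a b (x, y) ξ * m ξ ∂μ).re) x y =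
      ((n : ℝ) ^ 2 / 4 - γ ^ 2) * (∫ ξ, poissonWave L γ a b (x, y) ξ * m ξ ∂μ).re := by
  have ha := hasTemperateGrowth_planeWave L h.temperate_left
  have hb := hasTemperateGrowth_planeWave L h.temperate_right
  have hmγ := hm.rpow_smul L hγ
  have hcancel (ξ : V) : extensionOp (1 - 2 * γ) (fun q => planeWave L a q ξ) (x, y) * m ξ =
      -(y ^ (2 * γ) • (extensionOp (1 + 2 * γ) (fun q => planeWave L b q ξ) (x, y) *
        ((π * ‖L ξ‖) ^ 2) ^ γ • m ξ)) := by
    rw [eq_neg_of_add_eq_zero_left (h.extensionOp_add L x hy ξ)]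
    simp only [neg_mul, smul_mul_assoc, mul_smul_comm]
  simp only [integral_poissonWave_mul L hγ h hm, Complex.add_re, Complex.smul_re, smul_eq_mul]
  have h₂ : (2 : WithTop ℕ∞) ≤ ∞ := by norm_cast
  refine neg_hypLap_rpow_mul_add (F := fun p => (∫ ξ, planeWave L a p ξ * m ξ ∂μ).re)
    (G := fun p => (∫ ξ, planeWave L b p ξ * ((π * ‖L ξ‖) ^ 2) ^ γ • m ξ ∂μ).re)
    ((contDiff_re_integral_mul ha hm).of_le h₂) ((contDiff_re_integral_mul hb hmγ).of_le h₂) hy ?_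
  rw [extensionOp_re_integral_mul _ ha hm, extensionOp_re_integral_mul _ hb hmγ,
    integral_congr_ae (.of_forall hcancel), integral_neg, integral_smul, Complex.neg_re,
    Complex.smul_re, smul_eq_mul, neg_add_cancel]

end PoissonIntegral

/-! ### Superpositions of products of plane waves -/

section Product

variable {n₁ n₂ : ℕ} {V : Type*} [NormedAddCommGroup V] [NormedSpace ℝ V] [MeasurableSpace V]
  (L₁ : V →L[ℝ] EuclideanSpace ℝ (Fin n₁)) (L₂ : V →L[ℝ] EuclideanSpace ℝ (Fin n₂))
  (μ : Measure V) (m : V → ℂ)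

/-- The superposition with amplitude `m` of products of plane waves with vertical profiles `a₁` and
`a₂` in the two factors. The coefficients of the four-term expansion have this form. -/
noncomputable def waveIntegral (a₁ a₂ : ℝ → ℝ) (x₁ : EuclideanSpace ℝ (Fin n₁)) (y₁ : ℝ)
    (x₂ : EuclideanSpace ℝ (Fin n₂)) (y₂ : ℝ) : ℝ :=
  (∫ ξ, planeWave L₁ a₁ (x₁, y₁) ξ * (planeWave L₂ a₂ (x₂, y₂) ξ * m ξ) ∂μ).re

/-- The superposition with amplitude `m` of products of Poisson multipliers of the two factors; for
`m` the Fourier transform of the Dirichlet data, it is the solution of the Dirichlet problem. -/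
noncomputable def poissonIntegral (γ₁ γ₂ : ℝ) (a₁ b₁ a₂ b₂ : ℝ → ℝ)
    (x₁ : EuclideanSpace ℝ (Fin n₁)) (y₁ : ℝ) (x₂ : EuclideanSpace ℝ (Fin n₂)) (y₂ : ℝ) : ℝ :=
  (∫ ξ, poissonWave L₁ γ₁ a₁ b₁ (x₁, y₁) ξ *
    (poissonWave L₂ γ₂ a₂ b₂ (x₂, y₂) ξ * m ξ) ∂μ).re

lemma waveIntegral_boundary {a₁ a₂ : ℝ → ℝ} (h₁ : a₁ 0 = 1) (h₂ : a₂ 0 = 1)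
    (x₁ : EuclideanSpace ℝ (Fin n₁)) (x₂ : EuclideanSpace ℝ (Fin n₂)) :
    waveIntegral L₁ L₂ μ m a₁ a₂ x₁ 0 x₂ 0 =
      (∫ ξ, (𝐞 ⟪x₁, L₁ ξ⟫ : ℂ) * (𝐞 ⟪x₂, L₂ ξ⟫ * m ξ) ∂μ).re := by
  simp only [waveIntegral, planeWave_boundary _ h₁, planeWave_boundary _ h₂]

variable [SecondCountableTopology V] [OpensMeasurableSpace V] {L₁ L₂ μ m}

lemma contDiff_waveIntegral {a₁ a₂ : ℝ → ℝ} (h₁ : a₁.HasTemperateGrowth)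
    (h₂ : a₂.HasTemperateGrowth) (hm : HasAllMoments μ m) :
    ContDiff ℝ ∞
      fun p : (EuclideanSpace ℝ (Fin n₁) × ℝ) × (EuclideanSpace ℝ (Fin n₂) × ℝ) =>
        waveIntegral L₁ L₂ μ m a₁ a₂ p.1.1 p.1.2 p.2.1 p.2.2 := by
  have hfst := hasTemperateGrowth_uncurry_comp_clm (hasTemperateGrowth_planeWave L₁ h₁)
    (.fst ℝ _ (EuclideanSpace ℝ (Fin n₂) × ℝ))
  have hsnd := hasTemperateGrowth_uncurry_comp_clm (hasTemperateGrowth_planeWave L₂ h₂)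
    (.snd ℝ (EuclideanSpace ℝ (Fin n₁) × ℝ) _)
  have hint := contDiff_re_integral_mul
    (Ψ := fun (p : (EuclideanSpace ℝ (Fin n₁) × ℝ) × (EuclideanSpace ℝ (Fin n₂) × ℝ)) ξ =>
      planeWave L₁ a₁ p.1 ξ * planeWave L₂ a₂ p.2 ξ) (hfst.mul hsnd) hm
  simpa only [waveIntegral, Prod.mk.eta, ← mul_assoc] using hint

variable {γ₁ γ₂ : ℝ} {a₁ b₁ a₂ b₂ : ℝ → ℝ} (hγ₁ : 0 ≤ γ₁) (hγ₂ : 0 ≤ γ₂)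
  (h₁ : IsPoissonProfile γ₁ a₁ b₁) (h₂ : IsPoissonProfile γ₂ a₂ b₂) (hm : HasAllMoments μ m)
include hγ₁ hγ₂ h₁ h₂ hm

lemma poissonIntegral_eq_four_terms (x₁ : EuclideanSpace ℝ (Fin n₁)) (y₁ : ℝ)
    (x₂ : EuclideanSpace ℝ (Fin n₂)) (y₂ : ℝ) :
    poissonIntegral L₁ L₂ μ m γ₁ γ₂ a₁ b₁ a₂ b₂ x₁ y₁ x₂ y₂ =
      y₁ ^ ((n₁ : ℝ) / 2 - γ₁) * y₂ ^ ((n₂ : ℝ) / 2 - γ₂) *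
        waveIntegral L₁ L₂ μ m a₁ a₂ x₁ y₁ x₂ y₂ +
      y₁ ^ ((n₁ : ℝ) / 2 - γ₁) * y₂ ^ ((n₂ : ℝ) / 2 + γ₂) *
        waveIntegral L₁ L₂ μ (fun ξ => ((π * ‖L₂ ξ‖) ^ 2) ^ γ₂ • m ξ) a₁ b₂ x₁ y₁ x₂ y₂ +
      y₁ ^ ((n₁ : ℝ) / 2 + γ₁) * y₂ ^ ((n₂ : ℝ) / 2 - γ₂) *
        waveIntegral L₁ L₂ μ (fun ξ => ((π * ‖L₁ ξ‖) ^ 2) ^ γ₁ • m ξ) b₁ a₂ x₁ y₁ x₂ y₂ +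
      y₁ ^ ((n₁ : ℝ) / 2 + γ₁) * y₂ ^ ((n₂ : ℝ) / 2 + γ₂) *
        waveIntegral L₁ L₂ μ (fun ξ => ((π * ‖L₂ ξ‖) ^ 2) ^ γ₂ • ((π * ‖L₁ ξ‖) ^ 2) ^ γ₁ • m ξ)
          b₁ b₂ x₁ y₁ x₂ y₂ := by
  have hsplit {a : ℝ → ℝ} {k : V → ℂ} (ha : a.HasTemperateGrowth) (hk : HasAllMoments μ k) :
      (∫ ξ, planeWave L₁ a (x₁, y₁) ξ * (poissonWave L₂ γ₂ a₂ b₂ (x₂, y₂) ξ * k ξ) ∂μ).re =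
        y₂ ^ ((n₂ : ℝ) / 2 - γ₂) * waveIntegral L₁ L₂ μ k a a₂ x₁ y₁ x₂ y₂ +
        y₂ ^ ((n₂ : ℝ) / 2 + γ₂) *
          waveIntegral L₁ L₂ μ (fun ξ => ((π * ‖L₂ ξ‖) ^ 2) ^ γ₂ • k ξ) a b₂ x₁ y₁ x₂ y₂ := by
    simp only [waveIntegral, mul_left_comm (planeWave L₁ _ _ _), mul_smul_comm,
      integral_poissonWave_mul L₂ hγ₂ h₂ (hk.planeWave_mul L₁ (x₁, y₁) ha), Complex.add_re,
      Complex.smul_re, smul_eq_mul]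
  rw [poissonIntegral, integral_poissonWave_mul L₁ hγ₁ h₁ (hm.poissonWave_mul L₂ hγ₂ h₂ _)]
  simp only [← mul_smul_comm, Complex.add_re, Complex.smul_re, hsplit h₁.temperate_left hm,
    hsplit h₁.temperate_right (hm.rpow_smul L₁ hγ₁), smul_eq_mul]
  ring

lemma neg_hypLap1_poissonIntegral (x₁ : EuclideanSpace ℝ (Fin n₁)) {y₁ : ℝ} (hy₁ : 0 < y₁)
    (x₂ : EuclideanSpace ℝ (Fin n₂)) (y₂ : ℝ) :
    -hypLap1 n₁ n₂ (poissonIntegral L₁ L₂ μ m γ₁ γ₂ a₁ b₁ a₂ b₂) x₁ y₁ x₂ y₂ =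
      ((n₁ : ℝ) ^ 2 / 4 - γ₁ ^ 2) *
        poissonIntegral L₁ L₂ μ m γ₁ γ₂ a₁ b₁ a₂ b₂ x₁ y₁ x₂ y₂ :=
  neg_hypLap_integral_poissonWave_mul L₁ hγ₁ h₁ (hm.poissonWave_mul L₂ hγ₂ h₂ _) x₁ hy₁

lemma neg_hypLap2_poissonIntegral (x₁ : EuclideanSpace ℝ (Fin n₁)) (y₁ : ℝ)
    (x₂ : EuclideanSpace ℝ (Fin n₂)) {y₂ : ℝ} (hy₂ : 0 < y₂) :
    -hypLap2 n₁ n₂ (poissonIntegral L₁ L₂ μ m γ₁ γ₂ a₁ b₁ a₂ b₂) x₁ y₁ x₂ y₂ =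
      ((n₂ : ℝ) ^ 2 / 4 - γ₂ ^ 2) *
        poissonIntegral L₁ L₂ μ m γ₁ γ₂ a₁ b₁ a₂ b₂ x₁ y₁ x₂ y₂ := by
  have hcomm (x : EuclideanSpace ℝ (Fin n₂)) (y : ℝ) :
      poissonIntegral L₁ L₂ μ m γ₁ γ₂ a₁ b₁ a₂ b₂ x₁ y₁ x y =
        (∫ ξ, poissonWave L₂ γ₂ a₂ b₂ (x, y) ξ *
          (poissonWave L₁ γ₁ a₁ b₁ (x₁, y₁) ξ * m ξ) ∂μ).re := by
    simp only [poissonIntegral, mul_left_comm]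
  rw [hypLap2, hcomm, funext₂ hcomm]
  exact neg_hypLap_integral_poissonWave_mul L₂ hγ₂ h₂ (hm.poissonWave_mul L₁ hγ₁ h₁ _) x₂ hy₂

end Product

lemma exists_schwartz_integral_fourierChar_eq {W₁ W₂ : Type*} [NormedAddCommGroup W₁]
    [InnerProductSpace ℝ W₁] [FiniteDimensional ℝ W₁] [MeasurableSpace W₁] [BorelSpace W₁]
    [NormedAddCommGroup W₂] [InnerProductSpace ℝ W₂] [FiniteDimensional ℝ W₂]
    [MeasurableSpace W₂] [BorelSpace W₂] (f : 𝓢(W₁ × W₂, ℝ)) :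
    ∃ m : 𝓢(WithLp 2 (W₁ × W₂), ℂ), ∀ x₁ x₂,
      ∫ ξ, (𝐞 ⟪x₁, WithLp.fstL 2 ℝ W₁ W₂ ξ⟫ : ℂ) * (𝐞 ⟪x₂, WithLp.sndL 2 ℝ W₁ W₂ ξ⟫ * m ξ) =
        f (x₁, x₂) := by
  let g : 𝓢(WithLp 2 (W₁ × W₂), ℂ) := (f.compCLMOfContinuousLinearEquiv ℝ
    (WithLp.prodContinuousLinearEquiv 2 ℝ W₁ W₂)).postcompCLM Complex.ofRealCLM
  refine ⟨𝓕 g, fun x₁ x₂ => ?_⟩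
  have hinv : (𝓕⁻ (𝓕 g) : 𝓢(WithLp 2 (W₁ × W₂), ℂ)) (WithLp.toLp 2 (x₁, x₂)) = f (x₁, x₂) := by
    rw [FourierTransform.fourierInv_fourier_eq]
    rfl
  rw [← hinv, SchwartzMap.fourierInv_coe, Real.fourierInv_eq]
  refine integral_congr_ae (.of_forall fun ξ => ?_)
  beta_reduce
  rw [real_inner_comm (WithLp.toLp 2 (x₁, x₂)), WithLp.prod_inner_apply,
    AddChar.map_add_eq_mul, ← mul_assoc]
  rfl

lemma Gamma_one_sub_ne_zero {γ : ℝ} (h : ∀ k : ℤ, γ ≠ k) : Gamma (1 - γ) ≠ 0 :=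
  Real.Gamma_ne_zero fun k hk => h (k + 1) (by push_cast; linarith)

theorem four_term_expansion_general {n₁ n₂ : ℕ} {γ₁ γ₂ : ℝ} (hγ₁ : 0 < γ₁) (hγ₂ : 0 < γ₂)
    (hγ₁int : ∀ k : ℤ, γ₁ ≠ k) (hγ₂int : ∀ k : ℤ, γ₂ ≠ k)
    (f : 𝓢(EuclideanSpace ℝ (Fin n₁) × EuclideanSpace ℝ (Fin n₂), ℝ)) :
    ∃ F G H I : EuclideanSpace ℝ (Fin n₁) → ℝ → EuclideanSpace ℝ (Fin n₂) → ℝ → ℝ,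
      (∀ W ∈ [F, G, H, I], ContDiff ℝ ∞
        fun p : (EuclideanSpace ℝ (Fin n₁) × ℝ) × (EuclideanSpace ℝ (Fin n₂) × ℝ) =>
          W p.1.1 p.1.2 p.2.1 p.2.2) ∧
      (∀ x₁ x₂, F x₁ 0 x₂ 0 = f (x₁, x₂)) ∧
      (let u : EuclideanSpace ℝ (Fin n₁) → ℝ → EuclideanSpace ℝ (Fin n₂) → ℝ → ℝ :=
        fun x₁ y₁ x₂ y₂ =>
          y₁ ^ ((n₁ : ℝ) / 2 - γ₁) * y₂ ^ ((n₂ : ℝ) / 2 - γ₂) * F x₁ y₁ x₂ y₂ +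
          y₁ ^ ((n₁ : ℝ) / 2 - γ₁) * y₂ ^ ((n₂ : ℝ) / 2 + γ₂) * G x₁ y₁ x₂ y₂ +
          y₁ ^ ((n₁ : ℝ) / 2 + γ₁) * y₂ ^ ((n₂ : ℝ) / 2 - γ₂) * H x₁ y₁ x₂ y₂ +
          y₁ ^ ((n₁ : ℝ) / 2 + γ₁) * y₂ ^ ((n₂ : ℝ) / 2 + γ₂) * I x₁ y₁ x₂ y₂
       ∀ x₁, ∀ y₁ : ℝ, 0 < y₁ → ∀ x₂, ∀ y₂ : ℝ, 0 < y₂ →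
        -(hypLap1 n₁ n₂ u x₁ y₁ x₂ y₂) = ((n₁ : ℝ) ^ 2 / 4 - γ₁ ^ 2) * u x₁ y₁ x₂ y₂ ∧
        -(hypLap2 n₁ n₂ u x₁ y₁ x₂ y₂) = ((n₂ : ℝ) ^ 2 / 4 - γ₂ ^ 2) * u x₁ y₁ x₂ y₂) := by
  obtain ⟨a₁, b₁, h₁⟩ := exists_isPoissonProfile hγ₁ (Gamma_one_sub_ne_zero hγ₁int)
  obtain ⟨a₂, b₂, h₂⟩ := exists_isPoissonProfile hγ₂ (Gamma_one_sub_ne_zero hγ₂int)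
  obtain ⟨m, hfm⟩ := exists_schwartz_integral_fourierChar_eq f
  let L₁ := WithLp.fstL 2 ℝ (EuclideanSpace ℝ (Fin n₁)) (EuclideanSpace ℝ (Fin n₂))
  let L₂ := WithLp.sndL 2 ℝ (EuclideanSpace ℝ (Fin n₁)) (EuclideanSpace ℝ (Fin n₂))
  have hm : HasAllMoments volume m := hasAllMoments_schwartz m
  have hm₁ := hm.rpow_smul L₁ hγ₁.le
  refine ⟨waveIntegral L₁ L₂ volume m a₁ a₂,
    waveIntegral L₁ L₂ volume (fun ξ => ((π * ‖L₂ ξ‖) ^ 2) ^ γ₂ • m ξ) a₁ b₂,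
    waveIntegral L₁ L₂ volume (fun ξ => ((π * ‖L₁ ξ‖) ^ 2) ^ γ₁ • m ξ) b₁ a₂,
    waveIntegral L₁ L₂ volume
      (fun ξ => ((π * ‖L₂ ξ‖) ^ 2) ^ γ₂ • ((π * ‖L₁ ξ‖) ^ 2) ^ γ₁ • m ξ) b₁ b₂,
    ?_, fun x₁ x₂ => ?_, ?_⟩
  · simp only [List.forall_mem_cons, List.not_mem_nil, IsEmpty.forall_iff, implies_true, and_true]
    exact ⟨contDiff_waveIntegral h₁.temperate_left h₂.temperate_left hm,
      contDiff_waveIntegral h₁.temperate_left h₂.temperate_right (hm.rpow_smul L₂ hγ₂.le),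
      contDiff_waveIntegral h₁.temperate_right h₂.temperate_left hm₁,
      contDiff_waveIntegral h₁.temperate_right h₂.temperate_right (hm₁.rpow_smul L₂ hγ₂.le)⟩
  · rw [waveIntegral_boundary _ _ _ _ h₁.left_zero h₂.left_zero, hfm, Complex.ofReal_re]
  · simp only [← poissonIntegral_eq_four_terms hγ₁.le hγ₂.le h₁ h₂ hm]
    exact fun x₁ y₁ hy₁ x₂ y₂ hy₂ =>
      ⟨neg_hypLap1_poissonIntegral hγ₁.le hγ₂.le h₁ h₂ hm x₁ hy₁ x₂ y₂,
        neg_hypLap2_poissonIntegral hγ₁.le hγ₂.le h₁ h₂ hm x₁ y₁ x₂ hy₂⟩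

/-- four-term asymptotic expansion: for smooth compactly supported
Dirichlet data `f` there is a strongly `(μ₁,μ₂)`-harmonic function on
`ℍ^{n₁+1} × ℍ^{n₂+1}` of the form
`u = y₁^{n₁/2-γ₁}y₂^{n₂/2-γ₂}F + y₁^{n₁/2-γ₁}y₂^{n₂/2+γ₂}G
   + y₁^{n₁/2+γ₁}y₂^{n₂/2-γ₂}H + y₁^{n₁/2+γ₁}y₂^{n₂/2+γ₂}I`
with `F, G, H, I` smooth up to the boundary and `F(x₁,0,x₂,0) = f(x₁,x₂)`. -/
theorem four_term_expansion
    (n₁ n₂ : ℕ) (hn₁ : 1 ≤ n₁) (hn₂ : 1 ≤ n₂)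
    (γ₁ γ₂ : ℝ) (hγ₁ : γ₁ ∈ Set.Ioo (0:ℝ) ((n₁ : ℝ)/2)) (hγ₂ : γ₂ ∈ Set.Ioo (0:ℝ) ((n₂ : ℝ)/2))
    (hγ₁int : ∀ k : ℤ, γ₁ ≠ (k : ℝ)) (hγ₂int : ∀ k : ℤ, γ₂ ≠ (k : ℝ))
    (μ₁ μ₂ : ℝ) (hμ₁ : μ₁ = (n₁ : ℝ)^2/4 - γ₁^2) (hμ₂ : μ₂ = (n₂ : ℝ)^2/4 - γ₂^2)
    (f : EuclideanSpace ℝ (Fin n₁) × EuclideanSpace ℝ (Fin n₂) → ℝ)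
    (hf : ContDiff ℝ (⊤ : ℕ∞) f) (hfsupp : HasCompactSupport f) :
    ∃ F G H I : EuclideanSpace ℝ (Fin n₁) → ℝ → EuclideanSpace ℝ (Fin n₂) → ℝ → ℝ,
      (∀ W ∈ [F, G, H, I], ContDiffOn ℝ (⊤ : ℕ∞)
        (fun p : (EuclideanSpace ℝ (Fin n₁) × ℝ) × (EuclideanSpace ℝ (Fin n₂) × ℝ) =>
          W p.1.1 p.1.2 p.2.1 p.2.2)
        {p : (EuclideanSpace ℝ (Fin n₁) × ℝ) × (EuclideanSpace ℝ (Fin n₂) × ℝ) |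
          0 ≤ p.1.2 ∧ 0 ≤ p.2.2}) ∧
      (∀ x₁ x₂, F x₁ 0 x₂ 0 = f (x₁, x₂)) ∧
      (let u : EuclideanSpace ℝ (Fin n₁) → ℝ → EuclideanSpace ℝ (Fin n₂) → ℝ → ℝ :=
        fun x₁ y₁ x₂ y₂ =>
          y₁ ^ ((n₁ : ℝ)/2 - γ₁) * y₂ ^ ((n₂ : ℝ)/2 - γ₂) * F x₁ y₁ x₂ y₂ +
          y₁ ^ ((n₁ : ℝ)/2 - γ₁) * y₂ ^ ((n₂ : ℝ)/2 + γ₂) * G x₁ y₁ x₂ y₂ +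
          y₁ ^ ((n₁ : ℝ)/2 + γ₁) * y₂ ^ ((n₂ : ℝ)/2 - γ₂) * H x₁ y₁ x₂ y₂ +
          y₁ ^ ((n₁ : ℝ)/2 + γ₁) * y₂ ^ ((n₂ : ℝ)/2 + γ₂) * I x₁ y₁ x₂ y₂
       ∀ x₁, ∀ y₁ : ℝ, 0 < y₁ → ∀ x₂, ∀ y₂ : ℝ, 0 < y₂ →
        -(hypLap1 n₁ n₂ u x₁ y₁ x₂ y₂) = μ₁ * u x₁ y₁ x₂ y₂ ∧
        -(hypLap2 n₁ n₂ u x₁ y₁ x₂ y₂) = μ₂ * u x₁ y₁ x₂ y₂) := by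

  obtain ⟨F, G, H, I, hW, hbdry, hu⟩ :=
    four_term_expansion_general hγ₁.1 hγ₂.1 hγ₁int hγ₂int (hfsupp.toSchwartzMap hf)
  exact ⟨F, G, H, I, fun W hmem => (hW W hmem).contDiffOn, hbdry, hμ₁ ▸ hμ₂ ▸ hu⟩
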